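/- arXiv:1205.3612 — 12 statements merged into one kernel-verified Lean document; each statement's English description precedes it below -/
import Mathlib

section
/- In typed monoids, if the untyped equality ⊢ a = b is derivable, then for all objects n,m, a : n→m is derivable if and only if b : n→m is derivable. -/
/-- Terms over the signature {·₂, 1₀}: variables, unit, product. -/
inductive MonTerm (X : Type) : Type where
  | var : X → MonTerm X
  | one : MonTerm X
  | mul : MonTerm X → MonTerm X → MonTerm X

/-- Typing judgement for typed monoids, in environment `Γ`. -/
inductive MonTyp {X T : Type} (Γ : X → T × T) : MonTerm X → T → T → Prop where
  | var (x : X) (n m : T) : Γ x = (n, m) → MonTyp Γ (.var x) n m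
  | one (n : T) : MonTyp Γ .one n n
  | mul {a b : MonTerm X} {n m p : T} :
      MonTyp Γ a n m → MonTyp Γ b m p → MonTyp Γ (.mul a b) n p

/-- Typed equality judgement for typed monoids, in environment `Γ`. -/
inductive MonEq {X T : Type} (Γ : X → T × T) : MonTerm X → MonTerm X → T → T → Prop where
  | var (x : X) (n m : T) : Γ x = (n, m) → MonEq Γ (.var x) (.var x) n m
  | symm {a b : MonTerm X} {n m : T} : MonEq Γ a b n m → MonEq Γ b a n m
  | trans {a b c : MonTerm X} {n m : T} :
      MonEq Γ a b n m → MonEq Γ b c n m → MonEq Γ a c n m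
  | one (n : T) : MonEq Γ .one .one n n
  | mul {a a' b b' : MonTerm X} {n m p : T} :
      MonEq Γ a a' n m → MonEq Γ b b' m p → MonEq Γ (.mul a b) (.mul a' b') n p
  | one_mul {a : MonTerm X} {n m : T} : MonTyp Γ a n m → MonEq Γ (.mul .one a) a n m
  | mul_one {a : MonTerm X} {n m : T} : MonTyp Γ a n m → MonEq Γ (.mul a .one) a n m
  | mul_assoc {a b c : MonTerm X} {n m p q : T} :
      MonTyp Γ a n m → MonTyp Γ b m p → MonTyp Γ c p q →
      MonEq Γ (.mul (.mul a b) c) (.mul a (.mul b c)) n q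

/-- In typed monoids, if the untyped equality `⊢ a = b` is derivable (i.e. the typed
equality over the singleton set of objects), then for all objects `n,m`,
`a : n→m` is derivable iff `b : n→m` is derivable. -/
theorem monoid_untyped_eq_preserves_types {X T : Type} (Γ : X → T × T)
    (a b : MonTerm X) :
    MonEq (fun _ : X => ((), ())) a b () () →
    ∀ n m : T, MonTyp Γ a n m ↔ MonTyp Γ b n m := by
  suffices key : ∀ u v : Unit, MonEq (fun _ : X => ((), ())) a b u v →
      ∀ n m : T, MonTyp Γ a n m ↔ MonTyp Γ b n m from key () ()
  intro u v h
  induction h with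
  | var x n m _ => intro n m; exact Iff.rfl
  | symm _ ih => intro n m; exact (ih n m).symm
  | trans _ _ ih1 ih2 => intro n m; exact (ih1 n m).trans (ih2 n m)
  | one _ => intro n m; exact Iff.rfl
  | mul _ _ ih1 ih2 =>
    intro n m
    constructor
    · rintro (_ | _ | ⟨h1, h2⟩)
      exact .mul ((ih1 _ _).1 h1) ((ih2 _ _).1 h2)
    · rintro (_ | _ | ⟨h1, h2⟩)
      exact .mul ((ih1 _ _).2 h1) ((ih2 _ _).2 h2)
  | one_mul _ =>
    intro n m
    constructor
    · intro h
      cases h with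
      | mul h1 h2 => cases h1; exact h2
    · intro h
      exact .mul (.one _) h
  | mul_one _ =>
    intro n m
    constructor
    · intro h
      cases h with
      | mul h1 h2 => cases h2; exact h1
    · intro h
      exact .mul h (.one _)
  | mul_assoc _ _ _ =>
    intro n m
    constructor
    · intro h
      cases h with
      | mul h1 h2 =>
        cases h1 with
        | mul h3 h4 => exact .mul h3 (.mul h4 h2)
    · intro h
      cases h with
      | mul h1 h2 =>
        cases h2 with
        | mul h3 h4 => exact .mul (.mul h1 h3) h4
end

section
/- Untyping theorem for monoids: if the untyped equality ⊢ a = b is derivable and both a : n→m and b : n→m are derivable in environment Γ, then the typed equality a = b : n→m is derivable in Γ. -/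
theorem MonEq.refl_of_typ {X T : Type} {Γ : X → T × T} {a : MonTerm X} {n m : T}
    (h : MonTyp Γ a n m) : MonEq Γ a a n m :=
  .trans (.symm (.one_mul h)) (.one_mul h)

/-- Right-nested normal form of `a` with accumulator `c`. -/
def MonTerm.nf {X : Type} : MonTerm X → MonTerm X → MonTerm X
  | .var x, c => .mul (.var x) c
  | .one, c => c
  | .mul a b, c => a.nf (b.nf c)

theorem MonTyp.nf {X T : Type} {Γ : X → T × T} {a : MonTerm X} {n m : T}
    (h : MonTyp Γ a n m) : ∀ {c : MonTerm X} {p : T}, MonTyp Γ c m p →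
      MonTyp Γ (a.nf c) n p ∧ MonEq Γ (.mul a c) (a.nf c) n p := by
  induction h with
  | var x n m hx =>
    intro c p hc
    have := MonTyp.mul (MonTyp.var x n m hx) hc
    exact ⟨this, MonEq.refl_of_typ this⟩
  | one n => intro c p hc; exact ⟨hc, .one_mul hc⟩
  | mul ha hb iha ihb =>
    intro c p hc
    obtain ⟨h1, h2⟩ := ihb hc
    obtain ⟨h3, h4⟩ := iha h1
    exact ⟨h3, .trans (.mul_assoc ha hb hc) (.trans (.mul (.refl_of_typ ha) h2) h4)⟩

theorem MonEq.nf_eq {X T : Type} {Γ : X → T × T} {a b : MonTerm X} {n m : T}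
    (h : MonEq Γ a b n m) : ∀ c, a.nf c = b.nf c := by
  induction h with
  | symm _ ih => intro c; exact (ih c).symm
  | trans _ _ ih1 ih2 => intro c; exact (ih1 c).trans (ih2 c)
  | mul _ _ ih1 ih2 => intro c; simp only [MonTerm.nf, ih1, ih2]
  | _ => intro c; rfl

/-- Untyping theorem for monoids: if the untyped equality `⊢ a = b` is derivable
(i.e. the typed equality over the singleton set of objects) and both `a : n→m` and
`b : n→m` are derivable in environment `Γ`, then the typed equality `a = b : n→m`
is derivable in `Γ`. -/
theorem monoid_untyping {X T : Type} (Γ : X → T × T)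
    (a b : MonTerm X) (n m : T) :
    MonEq (fun _ : X => ((), ())) a b () () →
    MonTyp Γ a n m → MonTyp Γ b n m →
    MonEq Γ a b n m := by
  intro h ha hb
  have h1 := (ha.nf (.one m)).2
  have h2 := (hb.nf (.one m)).2
  rw [← h.nf_eq] at h2
  exact .trans (.symm (.mul_one ha)) (.trans h1 (.trans (.symm h2) (.mul_one hb)))
end

section
/- In typed semirings, normalization preserves types and equality: if a : n→m is derivable, then ⌊a⌋ : n→m and a = ⌊a⌋ : n→m are derivable. -/
/-- Terms over the signature {·₂, +₂, 1₀, 0₀}. -/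
inductive SRTerm (X : Type) : Type where
  | var : X → SRTerm X
  | one : SRTerm X
  | zero : SRTerm X
  | mul : SRTerm X → SRTerm X → SRTerm X
  | add : SRTerm X → SRTerm X → SRTerm X

/-- Typing judgement for typed semirings, in environment `Γ`. -/
inductive SRTyp {X T : Type} (Γ : X → T × T) : SRTerm X → T → T → Prop where
  | var (x : X) (n m : T) : Γ x = (n, m) → SRTyp Γ (.var x) n m
  | one (n : T) : SRTyp Γ .one n n
  | zero (n m : T) : SRTyp Γ .zero n m
  | mul {a b : SRTerm X} {n m p : T} :
      SRTyp Γ a n m → SRTyp Γ b m p → SRTyp Γ (.mul a b) n p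
  | add {a b : SRTerm X} {n m : T} :
      SRTyp Γ a n m → SRTyp Γ b n m → SRTyp Γ (.add a b) n m

/-- `⌊a⌋`: the normal form of `a` for the convergent rewriting system
`a+0 → a`, `0+a → a`, `0·a → 0`, `a·0 → 0`. -/
def SRTerm.norm {X : Type} : SRTerm X → SRTerm X
  | .var x => .var x
  | .one => .one
  | .zero => .zero
  | .mul a b =>
    match a.norm, b.norm with
    | .zero, _ => .zero
    | _, .zero => .zero
    | a', b' => .mul a' b'
  | .add a b =>
    match a.norm, b.norm with
    | .zero, b' => b'
    | a', .zero => a'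
    | a', b' => .add a' b'

/-- Typed equality judgement for typed semirings, in environment `Γ`. -/
inductive SREq {X T : Type} (Γ : X → T × T) : SRTerm X → SRTerm X → T → T → Prop where
  | var (x : X) (n m : T) : Γ x = (n, m) → SREq Γ (.var x) (.var x) n m
  | symm {a b : SRTerm X} {n m : T} : SREq Γ a b n m → SREq Γ b a n m
  | trans {a b c : SRTerm X} {n m : T} :
      SREq Γ a b n m → SREq Γ b c n m → SREq Γ a c n m
  | one (n : T) : SREq Γ .one .one n n
  | zero (n m : T) : SREq Γ .zero .zero n m
  | mul {a a' b b' : SRTerm X} {n m p : T} :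
      SREq Γ a a' n m → SREq Γ b b' m p → SREq Γ (.mul a b) (.mul a' b') n p
  | add {a a' b b' : SRTerm X} {n m : T} :
      SREq Γ a a' n m → SREq Γ b b' n m → SREq Γ (.add a b) (.add a' b') n m
  | one_mul {a : SRTerm X} {n m : T} : SRTyp Γ a n m → SREq Γ (.mul .one a) a n m
  | mul_one {a : SRTerm X} {n m : T} : SRTyp Γ a n m → SREq Γ (.mul a .one) a n m
  | mul_assoc {a b c : SRTerm X} {n m p q : T} :
      SRTyp Γ a n m → SRTyp Γ b m p → SRTyp Γ c p q →
      SREq Γ (.mul (.mul a b) c) (.mul a (.mul b c)) n q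
  | add_zero {a : SRTerm X} {n m : T} : SRTyp Γ a n m → SREq Γ (.add a .zero) a n m
  | add_comm {a b : SRTerm X} {n m : T} :
      SRTyp Γ a n m → SRTyp Γ b n m → SREq Γ (.add a b) (.add b a) n m
  | add_assoc {a b c : SRTerm X} {n m : T} :
      SRTyp Γ a n m → SRTyp Γ b n m → SRTyp Γ c n m →
      SREq Γ (.add (.add a b) c) (.add a (.add b c)) n m
  | mul_add {a b c : SRTerm X} {n m p : T} :
      SRTyp Γ a n m → SRTyp Γ b m p → SRTyp Γ c m p →
      SREq Γ (.mul a (.add b c)) (.add (.mul a b) (.mul a c)) n p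
  | add_mul {a b c : SRTerm X} {n m p : T} :
      SRTyp Γ a n m → SRTyp Γ b p n → SRTyp Γ c p n →
      SREq Γ (.mul (.add b c) a) (.add (.mul b a) (.mul c a)) p m
  | mul_zero {a : SRTerm X} {n m p : T} : SRTyp Γ a n m → SREq Γ (.mul a .zero) .zero n p
  | zero_mul {a : SRTerm X} {n m p : T} : SRTyp Γ a n m → SREq Γ (.mul .zero a) .zero p m

/-- In typed semirings, normalization preserves types and equality:
if `a : n→m` is derivable, then `⌊a⌋ : n→m` and `a = ⌊a⌋ : n→m` are derivable. -/
theorem semiring_norm_preserves {X T : Type} (Γ : X → T × T)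
    (a : SRTerm X) (n m : T) :
    SRTyp Γ a n m → SRTyp Γ a.norm n m ∧ SREq Γ a a.norm n m := by
  intro h
  induction h with
  | var x n m hx => exact ⟨.var x n m hx, .var x n m hx⟩
  | one n => exact ⟨.one n, .one n⟩
  | zero n m => exact ⟨.zero n m, .zero n m⟩
  | mul _ _ iha ihb =>
    obtain ⟨ta, ea⟩ := iha
    obtain ⟨tb, eb⟩ := ihb
    have e := SREq.mul ea eb
    simp only [SRTerm.norm]
    split
    · rename_i h1
      rw [h1] at e
      exact ⟨.zero _ _, e.trans (.zero_mul tb)⟩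
    · rename_i h2 _
      rw [h2] at e
      exact ⟨.zero _ _, e.trans (.mul_zero ta)⟩
    · exact ⟨.mul ta tb, e⟩
  | add _ _ iha ihb =>
    obtain ⟨ta, ea⟩ := iha
    obtain ⟨tb, eb⟩ := ihb
    have e := SREq.add ea eb
    simp only [SRTerm.norm]
    split
    · rename_i h1
      rw [h1] at e
      exact ⟨tb, e.trans ((SREq.add_comm (.zero _ _) tb).trans (.add_zero tb))⟩
    · rename_i h2 _
      rw [h2] at e
      exact ⟨ta, e.trans (.add_zero ta)⟩
    · exact ⟨.add ta tb, e⟩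
end

section
/- In typed semirings, for all strict terms a (i.e. terms with ⌊a⌋ ≠ 0) such that a : n→m and a : n'→m' are derivable, one has n = n' if and only if m = m'. -/
/-- In typed semirings, for all strict terms `a` (i.e. `⌊a⌋ ≠ 0`) such that `a : n→m`
and `a : n'→m'` are derivable, one has `n = n'` iff `m = m'`. -/
theorem semiring_strict_type_injective {X T : Type} (Γ : X → T × T)
    (a : SRTerm X) (n m n' m' : T) :
    a.norm ≠ .zero → SRTyp Γ a n m → SRTyp Γ a n' m' → (n = n' ↔ m = m') := by
  intro h h1 h2
  induction a generalizing n m n' m' with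
  | var x =>
    cases h1 with | var _ _ _ e1 => cases h2 with | var _ _ _ e2 =>
    rw [e1] at e2
    simp_all
  | one => cases h1; cases h2; exact Iff.rfl
  | zero => exact absurd rfl h
  | mul a b iha ihb =>
    have ha : a.norm ≠ .zero := by
      intro e; apply h; simp [SRTerm.norm, e]
    have hb : b.norm ≠ .zero := by
      intro e; apply h; simp only [SRTerm.norm, e]
    cases h1 with | mul p q => cases h2 with | mul p' q' =>
    exact (iha _ _ _ _ ha p p').trans (ihb _ _ _ _ hb q q')
  | add a b iha ihb =>
    cases h1 with | add p q => cases h2 with | add p' q' =>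
    by_cases ha : a.norm = .zero
    · have hb : b.norm ≠ .zero := by
        intro e; apply h; simp [SRTerm.norm, ha, e]
      exact ihb _ _ _ _ hb q q'
    · exact iha _ _ _ _ ha p p'
end

section
/- In typed semirings, if the untyped strict equality ⊢ a =⁺ b is derivable, then for all objects n,m, a : n→m is derivable if and only if b : n→m is derivable. -/
/-- Strict typed equality judgement `a =⁺ b : n→m` for typed semirings: the semiring
equality judgement without the annihilation rules, and with the two distributivity
rules restricted to strict factors. -/
inductive SREqS {X T : Type} (Γ : X → T × T) : SRTerm X → SRTerm X → T → T → Prop where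
  | var (x : X) (n m : T) : Γ x = (n, m) → SREqS Γ (.var x) (.var x) n m
  | symm {a b : SRTerm X} {n m : T} : SREqS Γ a b n m → SREqS Γ b a n m
  | trans {a b c : SRTerm X} {n m : T} :
      SREqS Γ a b n m → SREqS Γ b c n m → SREqS Γ a c n m
  | one (n : T) : SREqS Γ .one .one n n
  | zero (n m : T) : SREqS Γ .zero .zero n m
  | mul {a a' b b' : SRTerm X} {n m p : T} :
      SREqS Γ a a' n m → SREqS Γ b b' m p → SREqS Γ (.mul a b) (.mul a' b') n p
  | add {a a' b b' : SRTerm X} {n m : T} :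
      SREqS Γ a a' n m → SREqS Γ b b' n m → SREqS Γ (.add a b) (.add a' b') n m
  | one_mul {a : SRTerm X} {n m : T} : SRTyp Γ a n m → SREqS Γ (.mul .one a) a n m
  | mul_one {a : SRTerm X} {n m : T} : SRTyp Γ a n m → SREqS Γ (.mul a .one) a n m
  | mul_assoc {a b c : SRTerm X} {n m p q : T} :
      SRTyp Γ a n m → SRTyp Γ b m p → SRTyp Γ c p q →
      SREqS Γ (.mul (.mul a b) c) (.mul a (.mul b c)) n q
  | add_zero {a : SRTerm X} {n m : T} : SRTyp Γ a n m → SREqS Γ (.add a .zero) a n m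
  | add_comm {a b : SRTerm X} {n m : T} :
      SRTyp Γ a n m → SRTyp Γ b n m → SREqS Γ (.add a b) (.add b a) n m
  | add_assoc {a b c : SRTerm X} {n m : T} :
      SRTyp Γ a n m → SRTyp Γ b n m → SRTyp Γ c n m →
      SREqS Γ (.add (.add a b) c) (.add a (.add b c)) n m
  | mul_add {a b c : SRTerm X} {n m p : T} :
      SRTyp Γ a n m → SRTyp Γ b m p → SRTyp Γ c m p → a.norm ≠ .zero →
      SREqS Γ (.mul a (.add b c)) (.add (.mul a b) (.mul a c)) n p
  | add_mul {a b c : SRTerm X} {n m p : T} :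
      SRTyp Γ a n m → SRTyp Γ b p n → SRTyp Γ c p n → a.norm ≠ .zero →
      SREqS Γ (.mul (.add b c) a) (.add (.mul b a) (.mul c a)) p m

theorem SRTerm.norm_mul_ne {X : Type} {a b : SRTerm X} (h : (SRTerm.mul a b).norm ≠ .zero) :
    a.norm ≠ .zero ∧ b.norm ≠ .zero := by
  constructor
  · intro ha
    apply h
    simp [SRTerm.norm, ha]
  · intro hb
    apply h
    simp only [SRTerm.norm, hb]
    cases a.norm <;> rfl

theorem SRTerm.norm_add_ne {X : Type} {a b : SRTerm X} (h : (SRTerm.add a b).norm ≠ .zero) :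
    a.norm ≠ .zero ∨ b.norm ≠ .zero := by
  by_contra hc
  push Not at hc
  apply h
  simp [SRTerm.norm, hc.1, hc.2]

/-- A strict term has at most one target for each source, and conversely. -/
theorem SRTyp.inj {X T : Type} {Γ : X → T × T} {a : SRTerm X} {n m : T} (h : SRTyp Γ a n m) :
    ∀ {n' m' : T}, SRTyp Γ a n' m' → a.norm ≠ .zero → (n = n' ↔ m = m') := by
  induction h with
  | var x n m hx =>
    intro n' m' h' _
    cases h' with
    | var _ _ _ h2 =>
      rw [hx] at h2
      simp_all
  | one n =>
    intro n' m' h' _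
    cases h'
    rfl
  | zero n m =>
    intro n' m' _ hs
    exact absurd rfl hs
  | mul _ _ iha ihb =>
    intro n' m' h' hs
    obtain ⟨h1, h2⟩ := SRTerm.norm_mul_ne hs
    cases h' with
    | mul ha hb => exact (iha ha h1).trans (ihb hb h2)
  | add _ _ iha ihb =>
    intro n' m' h' hs
    cases h' with
    | add ha hb =>
      rcases SRTerm.norm_add_ne hs with h1 | h1
      · exact iha ha h1
      · exact ihb hb h1

theorem SRTyp.mul_iff {X T : Type} {Γ : X → T × T} {a b : SRTerm X} {n p : T} :
    SRTyp Γ (.mul a b) n p ↔ ∃ m, SRTyp Γ a n m ∧ SRTyp Γ b m p := by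
  constructor
  · intro h
    cases h with
    | mul h1 h2 => exact ⟨_, h1, h2⟩
  · rintro ⟨m, h1, h2⟩
    exact .mul h1 h2

theorem SRTyp.add_iff {X T : Type} {Γ : X → T × T} {a b : SRTerm X} {n p : T} :
    SRTyp Γ (.add a b) n p ↔ SRTyp Γ a n p ∧ SRTyp Γ b n p := by
  constructor
  · intro h
    cases h with
    | add h1 h2 => exact ⟨h1, h2⟩
  · rintro ⟨h1, h2⟩
    exact .add h1 h2

theorem SRTyp.one_iff {X T : Type} {Γ : X → T × T} {n p : T} :
    SRTyp Γ .one n p ↔ n = p := by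
  constructor
  · intro h
    cases h
    rfl
  · rintro rfl
    exact .one _

theorem SRTyp.zero_iff {X T : Type} {Γ : X → T × T} {n p : T} :
    SRTyp Γ .zero n p ↔ True := ⟨fun _ => trivial, fun _ => .zero _ _⟩

theorem SREqS.typ_iff {X S T : Type} (Δ : X → S × S) (Γ : X → T × T)
    {a b : SRTerm X} {s t : S} (h : SREqS Δ a b s t) :
    ∀ n m : T, SRTyp Γ a n m ↔ SRTyp Γ b n m := by
  induction h with
  | var => intros; rfl
  | symm _ ih => intro n m; exact (ih n m).symm
  | trans _ _ ih1 ih2 => intro n m; exact (ih1 n m).trans (ih2 n m)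
  | one => intros; rfl
  | zero => intros; rfl
  | mul _ _ ih1 ih2 => intro n m; simp only [SRTyp.mul_iff, ih1, ih2]
  | add _ _ ih1 ih2 => intro n m; simp only [SRTyp.add_iff, ih1, ih2]
  | one_mul => intro n m; simp [SRTyp.mul_iff, SRTyp.one_iff]
  | mul_one => intro n m; simp [SRTyp.mul_iff, SRTyp.one_iff]
  | mul_assoc =>
    intro n m
    simp only [SRTyp.mul_iff]
    constructor
    · rintro ⟨p, ⟨q, h1, h2⟩, h3⟩
      exact ⟨q, h1, p, h2, h3⟩
    · rintro ⟨q, h1, p, h2, h3⟩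
      exact ⟨p, ⟨q, h1, h2⟩, h3⟩
  | add_zero => intro n m; simp [SRTyp.add_iff, SRTyp.zero_iff]
  | add_comm => intro n m; simp only [SRTyp.add_iff, and_comm]
  | add_assoc => intro n m; simp only [SRTyp.add_iff, and_assoc]
  | mul_add _ _ _ hs =>
    intro n m
    simp only [SRTyp.mul_iff, SRTyp.add_iff]
    constructor
    · rintro ⟨p, h1, h2, h3⟩
      exact ⟨⟨p, h1, h2⟩, ⟨p, h1, h3⟩⟩
    · rintro ⟨⟨p, h1, h2⟩, ⟨q, h3, h4⟩⟩
      obtain rfl := (h1.inj h3 hs).1 rfl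
      exact ⟨p, h1, h2, h4⟩
  | add_mul _ _ _ hs =>
    intro n m
    simp only [SRTyp.mul_iff, SRTyp.add_iff]
    constructor
    · rintro ⟨p, ⟨h1, h2⟩, h3⟩
      exact ⟨⟨p, h1, h3⟩, ⟨p, h2, h3⟩⟩
    · rintro ⟨⟨p, h1, h2⟩, ⟨q, h3, h4⟩⟩
      obtain rfl := (h2.inj h4 hs).2 rfl
      exact ⟨p, ⟨h1, h3⟩, h2⟩

/-- In typed semirings, if the untyped strict equality `⊢ a =⁺ b` is derivable
(i.e. the strict equality over the singleton set of objects), then for all objects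
`n,m`, `a : n→m` is derivable iff `b : n→m` is derivable. -/
theorem semiring_strict_eq_preserves_types {X T : Type} (Γ : X → T × T)
    (a b : SRTerm X) :
    SREqS (fun _ : X => ((), ())) a b () () →
    ∀ n m : T, SRTyp Γ a n m ↔ SRTyp Γ b n m := by
  exact fun h => h.typ_iff _ Γ
end

section
/- Untyping theorem for semirings: for all terms a,b and objects n,m such that a : n→m and b : n→m are derivable in environment Γ, the untyped equality ⊢ a = b is derivable if and only if the typed equality a = b : n→m is derivable in Γ. -/
namespace SRAux

variable {X T : Type} {Γ : X → T × T}

/-- Words as terms. -/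
def W : List X → SRTerm X
  | [] => .one
  | x :: w => .mul (.var x) (W w)

/-- Sums of words as terms. -/
def S : List (List X) → SRTerm X
  | [] => .zero
  | w :: l => .add (W w) (S l)

/-- Product of lists of words. -/
def P (k l : List (List X)) : List (List X) := k.flatMap fun u => l.map fun v => u ++ v

/-- The list of words of a term. -/
def L : SRTerm X → List (List X)
  | .var x => [[x]]
  | .one => [[]]
  | .zero => []
  | .mul a b => P (L a) (L b)
  | .add a b => L a ++ L b

theorem refl {a : SRTerm X} {n m : T} (h : SRTyp Γ a n m) : SREq Γ a a n m :=
  .trans (.symm (.add_zero h)) (.add_zero h)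

theorem sound {a b : SRTerm X} {n m : T} (h : SREq Γ a b n m) : (L a).Perm (L b) := by
  induction h with
  | var | one | zero => exact .refl _
  | symm _ ih => exact ih.symm
  | trans _ _ ih1 ih2 => exact ih1.trans ih2
  | mul _ _ ih1 ih2 => exact List.Perm.flatMap ih1 fun u _ => ih2.map _
  | add _ _ ih1 ih2 => exact ih1.append ih2
  | one_mul _ => simp [L, P]
  | mul_one _ => simp [L, P]
  | mul_assoc _ _ _ =>
    simp [L, P, List.flatMap_assoc, List.flatMap_map, List.map_flatMap, Function.comp_def]
  | add_zero _ => simp [L]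
  | add_comm _ _ => exact List.perm_append_comm
  | add_assoc _ _ _ => simp [L]
  | mul_add _ _ _ =>
    simp only [L, P, List.map_append]
    exact (List.flatMap_append_perm _ _ _).symm
  | add_mul _ _ _ => simp [L, P]
  | mul_zero _ => simp [L, P]
  | zero_mul _ => simp [L, P]

theorem W_append {u v : List X} {n m p : T} (hu : SRTyp Γ (W u) n m) (hv : SRTyp Γ (W v) m p) :
    SRTyp Γ (W (u ++ v)) n p ∧ SREq Γ (.mul (W u) (W v)) (W (u ++ v)) n p := by
  induction u generalizing n with
  | nil => cases hu; exact ⟨hv, .one_mul hv⟩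
  | cons x u ih =>
    cases hu with
    | mul hx hu =>
      obtain ⟨h1, h2⟩ := ih hu
      exact ⟨.mul hx h1, .trans (.mul_assoc hx hu hv) (.mul (refl hx) h2)⟩

theorem S_typ {l : List (List X)} {n m : T} (h : ∀ w ∈ l, SRTyp Γ (W w) n m) :
    SRTyp Γ (S l) n m := by
  induction l with
  | nil => exact .zero _ _
  | cons w l ih =>
    exact .add (h w (by simp)) (ih fun v hv => h v (by simp [hv]))

theorem zero_add {a : SRTerm X} {n m : T} (h : SRTyp Γ a n m) : SREq Γ (.add .zero a) a n m :=
  .trans (.add_comm (.zero _ _) h) (.add_zero h)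

theorem S_append {k l : List (List X)} {n m : T} (hk : ∀ w ∈ k, SRTyp Γ (W w) n m)
    (hl : ∀ w ∈ l, SRTyp Γ (W w) n m) :
    SREq Γ (.add (S k) (S l)) (S (k ++ l)) n m := by
  induction k with
  | nil => exact zero_add (S_typ hl)
  | cons w k ih =>
    have hw := hk w (by simp)
    have hk' : ∀ w ∈ k, SRTyp Γ (W w) n m := fun v hv => hk v (by simp [hv])
    exact .trans (.add_assoc hw (S_typ hk') (S_typ hl)) (.add (refl hw) (ih hk'))

theorem S_map {u : List X} {l : List (List X)} {n m p : T} (hu : SRTyp Γ (W u) n m)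
    (hl : ∀ w ∈ l, SRTyp Γ (W w) m p) :
    SREq Γ (.mul (W u) (S l)) (S (l.map fun v => u ++ v)) n p := by
  induction l with
  | nil => exact .mul_zero hu
  | cons w l ih =>
    have hw := hl w (by simp)
    have hl' : ∀ w ∈ l, SRTyp Γ (W w) m p := fun v hv => hl v (by simp [hv])
    exact .trans (.mul_add hu hw (S_typ hl')) (.add (W_append hu hw).2 (ih hl'))

theorem P_typ {k l : List (List X)} {n m p : T} (hk : ∀ w ∈ k, SRTyp Γ (W w) n m)
    (hl : ∀ w ∈ l, SRTyp Γ (W w) m p) : ∀ w ∈ P k l, SRTyp Γ (W w) n p := by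
  intro w hw
  simp only [P, List.mem_flatMap, List.mem_map] at hw
  obtain ⟨u, hu, v, hv, rfl⟩ := hw
  exact (W_append (hk u hu) (hl v hv)).1

theorem S_mul {k l : List (List X)} {n m p : T} (hk : ∀ w ∈ k, SRTyp Γ (W w) n m)
    (hl : ∀ w ∈ l, SRTyp Γ (W w) m p) :
    SREq Γ (.mul (S k) (S l)) (S (P k l)) n p := by
  induction k with
  | nil => exact .zero_mul (S_typ hl)
  | cons w k ih =>
    have hw := hk w (by simp)
    have hk' : ∀ w ∈ k, SRTyp Γ (W w) n m := fun v hv => hk v (by simp [hv])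
    refine .trans (.add_mul (S_typ hl) hw (S_typ hk')) (.trans (.add (S_map hw hl) (ih hk')) ?_)
    refine S_append ?_ (P_typ hk' hl)
    intro z hz
    obtain ⟨v, hv, rfl⟩ := List.mem_map.1 hz
    exact (W_append hw (hl v hv)).1

theorem nf {a : SRTerm X} {n m : T} (h : SRTyp Γ a n m) :
    (∀ w ∈ L a, SRTyp Γ (W w) n m) ∧ SREq Γ a (S (L a)) n m := by
  induction h with
  | var x n m h =>
    have hx : SRTyp Γ (.var x) n m := .var x n m h
    have h1 : SRTyp Γ (W [x]) n m := .mul hx (.one m)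
    exact ⟨by simpa [L] using h1, .symm (.trans (.add_zero h1) (.mul_one hx))⟩
  | one n =>
    exact ⟨by simpa [L, W] using SRTyp.one n, .symm (.add_zero (.one n))⟩
  | zero n m => exact ⟨by simp [L], .zero n m⟩
  | mul _ _ ih1 ih2 =>
    exact ⟨P_typ ih1.1 ih2.1, .trans (.mul ih1.2 ih2.2) (S_mul ih1.1 ih2.1)⟩
  | add _ _ ih1 ih2 =>
    refine ⟨?_, .trans (.add ih1.2 ih2.2) (S_append ih1.1 ih2.1)⟩
    intro w hw
    rcases List.mem_append.1 hw with hw | hw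
    · exact ih1.1 w hw
    · exact ih2.1 w hw

theorem S_perm {k l : List (List X)} (h : k.Perm l) {n m : T}
    (hk : ∀ w ∈ k, SRTyp Γ (W w) n m) : SREq Γ (S k) (S l) n m := by
  induction h with
  | nil => exact .zero n m
  | cons w _ ih =>
    exact .add (refl (hk w (by simp))) (ih fun v hv => hk v (by simp [hv]))
  | swap x y l =>
    have hx := hk x (by simp)
    have hy := hk y (by simp)
    have hl : SRTyp Γ (S l) n m := S_typ fun v hv => hk v (by simp [hv])
    exact .trans (.symm (.add_assoc hy hx hl))
      (.trans (.add (.add_comm hy hx) (refl hl)) (.add_assoc hx hy hl))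
  | trans h1 _ ih1 ih2 =>
    exact .trans (ih1 hk) (ih2 fun w hw => hk w (h1.mem_iff.2 hw))

theorem typ_unit (a : SRTerm X) : SRTyp (fun _ : X => ((), ())) a () () := by
  induction a with
  | var x => exact .var x _ _ rfl
  | one => exact .one _
  | zero => exact .zero _ _
  | mul _ _ h1 h2 => exact .mul h1 h2
  | add _ _ h1 h2 => exact .add h1 h2

end SRAux

/-- Untyping theorem for semirings: for all terms `a,b` and objects `n,m` such that
`a : n→m` and `b : n→m` are derivable in environment `Γ`, the untyped equality
`⊢ a = b` (i.e. the equality over the singleton set of objects) is derivable iff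
the typed equality `a = b : n→m` is derivable in `Γ`. -/
theorem semiring_untyping {X T : Type} (Γ : X → T × T)
    (a b : SRTerm X) (n m : T) :
    SRTyp Γ a n m → SRTyp Γ b n m →
    (SREq (fun _ : X => ((), ())) a b () () ↔ SREq Γ a b n m) := by
  intro ha hb
  obtain ⟨ta, ea⟩ := SRAux.nf ha
  obtain ⟨_, eb⟩ := SRAux.nf hb
  constructor
  · intro h
    exact .trans ea (.trans (SRAux.S_perm (SRAux.sound h) ta) (.symm eb))
  · intro h
    have ea' := (SRAux.nf (SRAux.typ_unit a))
    have eb' := (SRAux.nf (SRAux.typ_unit b))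
    exact .trans ea'.2 (.trans (SRAux.S_perm (SRAux.sound h) ea'.1) (.symm eb'.2))
end

section
/- In typed Kleene algebras, normalization preserves types and equality: if a : n→m is derivable, then ⌊a⌋ : n→m and a = ⌊a⌋ : n→m are derivable, where ⌊a⌋ is the normal form for the rewriting system a+0 → a, 0+a → a, 0·a → 0, a·0 → 0, 0* → 1. -/
/-- Terms over the signature {·₂, +₂, *₁, 1₀, 0₀}. -/
inductive KTerm (X : Type) : Type where
  | var : X → KTerm X
  | one : KTerm X
  | zero : KTerm X
  | mul : KTerm X → KTerm X → KTerm X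
  | add : KTerm X → KTerm X → KTerm X
  | star : KTerm X → KTerm X

/-- Typing judgement for typed Kleene algebras, in environment `Γ`. -/
inductive KTyp {X T : Type} (Γ : X → T × T) : KTerm X → T → T → Prop where
  | var (x : X) (n m : T) : Γ x = (n, m) → KTyp Γ (.var x) n m
  | one (n : T) : KTyp Γ .one n n
  | zero (n m : T) : KTyp Γ .zero n m
  | mul {a b : KTerm X} {n m p : T} :
      KTyp Γ a n m → KTyp Γ b m p → KTyp Γ (.mul a b) n p
  | add {a b : KTerm X} {n m : T} :
      KTyp Γ a n m → KTyp Γ b n m → KTyp Γ (.add a b) n m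
  | star {a : KTerm X} {n : T} : KTyp Γ a n n → KTyp Γ (.star a) n n

/-- `⌊a⌋`: the normal form of `a` for the convergent rewriting system
`a+0 → a`, `0+a → a`, `0·a → 0`, `a·0 → 0`, `0* → 1`. -/
def KTerm.norm {X : Type} : KTerm X → KTerm X
  | .var x => .var x
  | .one => .one
  | .zero => .zero
  | .mul a b =>
    match a.norm, b.norm with
    | .zero, _ => .zero
    | _, .zero => .zero
    | a', b' => .mul a' b'
  | .add a b =>
    match a.norm, b.norm with
    | .zero, b' => b'
    | a', .zero => a'
    | a', b' => .add a' b'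
  | .star a =>
    match a.norm with
    | .zero => .one
    | a' => .star a'

/-- Typed equality judgement for typed Kleene algebras, in environment `Γ`.
`a ≤ b : n→m` abbreviates `a+b = b : n→m`. -/
inductive KEq {X T : Type} (Γ : X → T × T) : KTerm X → KTerm X → T → T → Prop where
  | var (x : X) (n m : T) : Γ x = (n, m) → KEq Γ (.var x) (.var x) n m
  | symm {a b : KTerm X} {n m : T} : KEq Γ a b n m → KEq Γ b a n m
  | trans {a b c : KTerm X} {n m : T} :
      KEq Γ a b n m → KEq Γ b c n m → KEq Γ a c n m
  | one (n : T) : KEq Γ .one .one n n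
  | zero (n m : T) : KEq Γ .zero .zero n m
  | mul {a a' b b' : KTerm X} {n m p : T} :
      KEq Γ a a' n m → KEq Γ b b' m p → KEq Γ (.mul a b) (.mul a' b') n p
  | add {a a' b b' : KTerm X} {n m : T} :
      KEq Γ a a' n m → KEq Γ b b' n m → KEq Γ (.add a b) (.add a' b') n m
  | star {a b : KTerm X} {n : T} : KEq Γ a b n n → KEq Γ (.star a) (.star b) n n
  | one_mul {a : KTerm X} {n m : T} : KTyp Γ a n m → KEq Γ (.mul .one a) a n m
  | mul_one {a : KTerm X} {n m : T} : KTyp Γ a n m → KEq Γ (.mul a .one) a n m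
  | mul_assoc {a b c : KTerm X} {n m p q : T} :
      KTyp Γ a n m → KTyp Γ b m p → KTyp Γ c p q →
      KEq Γ (.mul (.mul a b) c) (.mul a (.mul b c)) n q
  | add_zero {a : KTerm X} {n m : T} : KTyp Γ a n m → KEq Γ (.add a .zero) a n m
  | add_comm {a b : KTerm X} {n m : T} :
      KTyp Γ a n m → KTyp Γ b n m → KEq Γ (.add a b) (.add b a) n m
  | add_assoc {a b c : KTerm X} {n m : T} :
      KTyp Γ a n m → KTyp Γ b n m → KTyp Γ c n m →
      KEq Γ (.add (.add a b) c) (.add a (.add b c)) n m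
  | mul_add {a b c : KTerm X} {n m p : T} :
      KTyp Γ a n m → KTyp Γ b m p → KTyp Γ c m p →
      KEq Γ (.mul a (.add b c)) (.add (.mul a b) (.mul a c)) n p
  | add_mul {a b c : KTerm X} {n m p : T} :
      KTyp Γ a n m → KTyp Γ b p n → KTyp Γ c p n →
      KEq Γ (.mul (.add b c) a) (.add (.mul b a) (.mul c a)) p m
  | mul_zero {a : KTerm X} {n m p : T} : KTyp Γ a n m → KEq Γ (.mul a .zero) .zero n p
  | zero_mul {a : KTerm X} {n m p : T} : KTyp Γ a n m → KEq Γ (.mul .zero a) .zero p m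
  | add_idem {a : KTerm X} {n m : T} : KTyp Γ a n m → KEq Γ (.add a a) a n m
  | star_unfold {a : KTerm X} {n : T} :
      KTyp Γ a n n → KEq Γ (.add .one (.mul a (.star a))) (.star a) n n
  | star_ind_l {a b : KTerm X} {n m : T} :
      KEq Γ (.add (.mul a b) b) b n m →
      KEq Γ (.add (.mul (.star a) b) b) b n m
  | star_ind_r {a b : KTerm X} {n m : T} :
      KEq Γ (.add (.mul b a) b) b n m →
      KEq Γ (.add (.mul b (.star a)) b) b n m

theorem KEq.zero_add {X T : Type} {Γ : X → T × T} {a : KTerm X} {n m : T}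
    (h : KTyp Γ a n m) : KEq Γ (.add .zero a) a n m :=
  (KEq.add_comm (KTyp.zero n m) h).trans (KEq.add_zero h)

theorem KEq.star_zero {X T : Type} {Γ : X → T × T} (n : T) :
    KEq Γ (.star .zero) .one n n :=
  (KEq.star_unfold (KTyp.zero n n)).symm.trans
    ((KEq.add (KEq.one n) (KEq.zero_mul (KTyp.star (KTyp.zero n n)))).trans
      (KEq.add_zero (KTyp.one n)))

/-- In typed Kleene algebras, normalization preserves types and equality:
if `a : n→m` is derivable, then `⌊a⌋ : n→m` and `a = ⌊a⌋ : n→m` are derivable. -/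
theorem kleene_norm_preserves {X T : Type} (Γ : X → T × T)
    (a : KTerm X) (n m : T) :
    KTyp Γ a n m → KTyp Γ a.norm n m ∧ KEq Γ a a.norm n m := by
  intro h
  induction h with
  | var x n m h => exact ⟨.var x n m h, .var x n m h⟩
  | one n => exact ⟨.one n, .one n⟩
  | zero n m => exact ⟨.zero n m, .zero n m⟩
  | @mul a b n m p _ _ iha ihb =>
    obtain ⟨ta, ea⟩ := iha
    obtain ⟨tb, eb⟩ := ihb
    have e := KEq.mul ea eb
    simp only [KTerm.norm]
    split
    · rename_i h1
      rw [h1] at e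
      exact ⟨.zero _ _, e.trans (KEq.zero_mul tb)⟩
    · rename_i h1 _
      rw [h1] at e
      exact ⟨.zero _ _, e.trans (KEq.mul_zero ta)⟩
    · exact ⟨.mul ta tb, e⟩
  | @add a b n m _ _ iha ihb =>
    obtain ⟨ta, ea⟩ := iha
    obtain ⟨tb, eb⟩ := ihb
    have e := KEq.add ea eb
    simp only [KTerm.norm]
    split
    · rename_i h1
      rw [h1] at e
      exact ⟨tb, e.trans (KEq.zero_add tb)⟩
    · rename_i h1 _
      rw [h1] at e
      exact ⟨ta, e.trans (KEq.add_zero ta)⟩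
    · exact ⟨.add ta tb, e⟩
  | @star a n _ iha =>
    obtain ⟨ta, ea⟩ := iha
    have e := KEq.star ea
    simp only [KTerm.norm]
    split
    · rename_i h1
      rw [h1] at e
      exact ⟨.one _, e.trans (KEq.star_zero n)⟩
    · exact ⟨.star ta, e⟩
end

section
/- Untyping theorem for strict Kleene algebra equality: if the untyped strict equality ⊢ a =⁺ b is derivable and both a : n→m and b : n→m are derivable in environment Γ, then the typed strict equality a =⁺ b : n→m is derivable in Γ. -/
/-- Strict typed equality judgement `a =⁺ b : n→m` for typed Kleene algebras: the
Kleene algebra equality judgement without the annihilation rules, with the two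
distributivity rules restricted to strict factors, and with the two star induction
rules restricted to strict `b`. `a ≤ b : n→m` abbreviates `a+b = b : n→m`. -/
inductive KEqS {X T : Type} (Γ : X → T × T) : KTerm X → KTerm X → T → T → Prop where
  | var (x : X) (n m : T) : Γ x = (n, m) → KEqS Γ (.var x) (.var x) n m
  | symm {a b : KTerm X} {n m : T} : KEqS Γ a b n m → KEqS Γ b a n m
  | trans {a b c : KTerm X} {n m : T} :
      KEqS Γ a b n m → KEqS Γ b c n m → KEqS Γ a c n m
  | one (n : T) : KEqS Γ .one .one n n
  | zero (n m : T) : KEqS Γ .zero .zero n m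
  | mul {a a' b b' : KTerm X} {n m p : T} :
      KEqS Γ a a' n m → KEqS Γ b b' m p → KEqS Γ (.mul a b) (.mul a' b') n p
  | add {a a' b b' : KTerm X} {n m : T} :
      KEqS Γ a a' n m → KEqS Γ b b' n m → KEqS Γ (.add a b) (.add a' b') n m
  | star {a b : KTerm X} {n : T} : KEqS Γ a b n n → KEqS Γ (.star a) (.star b) n n
  | one_mul {a : KTerm X} {n m : T} : KTyp Γ a n m → KEqS Γ (.mul .one a) a n m
  | mul_one {a : KTerm X} {n m : T} : KTyp Γ a n m → KEqS Γ (.mul a .one) a n m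
  | mul_assoc {a b c : KTerm X} {n m p q : T} :
      KTyp Γ a n m → KTyp Γ b m p → KTyp Γ c p q →
      KEqS Γ (.mul (.mul a b) c) (.mul a (.mul b c)) n q
  | add_zero {a : KTerm X} {n m : T} : KTyp Γ a n m → KEqS Γ (.add a .zero) a n m
  | add_comm {a b : KTerm X} {n m : T} :
      KTyp Γ a n m → KTyp Γ b n m → KEqS Γ (.add a b) (.add b a) n m
  | add_assoc {a b c : KTerm X} {n m : T} :
      KTyp Γ a n m → KTyp Γ b n m → KTyp Γ c n m →
      KEqS Γ (.add (.add a b) c) (.add a (.add b c)) n m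
  | mul_add {a b c : KTerm X} {n m p : T} :
      KTyp Γ a n m → KTyp Γ b m p → KTyp Γ c m p → a.norm ≠ .zero →
      KEqS Γ (.mul a (.add b c)) (.add (.mul a b) (.mul a c)) n p
  | add_mul {a b c : KTerm X} {n m p : T} :
      KTyp Γ a n m → KTyp Γ b p n → KTyp Γ c p n → a.norm ≠ .zero →
      KEqS Γ (.mul (.add b c) a) (.add (.mul b a) (.mul c a)) p m
  | add_idem {a : KTerm X} {n m : T} : KTyp Γ a n m → KEqS Γ (.add a a) a n m
  | star_unfold {a : KTerm X} {n : T} :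
      KTyp Γ a n n → KEqS Γ (.add .one (.mul a (.star a))) (.star a) n n
  | star_ind_l {a b : KTerm X} {n m : T} :
      KEqS Γ (.add (.mul a b) b) b n m → b.norm ≠ .zero →
      KEqS Γ (.add (.mul (.star a) b) b) b n m
  | star_ind_r {a b : KTerm X} {n m : T} :
      KEqS Γ (.add (.mul b a) b) b n m → b.norm ≠ .zero →
      KEqS Γ (.add (.mul b (.star a)) b) b n m

/-- A strict term has at most one target for each source, and conversely. -/
theorem KTyp.strict_unique {X T : Type} {Γ : X → T × T} {a : KTerm X} {n m : T}
    (h : KTyp Γ a n m) : a.norm ≠ .zero → ∀ n' m', KTyp Γ a n' m' → (n = n' ↔ m = m') := by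
  induction h with
  | var x n m hx =>
    intro _ n' m' h'
    cases h' with
    | var _ _ _ hx' =>
      rw [hx] at hx'
      cases hx'
      simp
  | one n =>
    intro _ n' m' h'
    cases h'
    exact Iff.rfl
  | zero n m =>
    intro hs
    exact absurd rfl hs
  | @mul a b n m p _ _ iha ihb =>
    intro hs n' m' h'
    have ha : a.norm ≠ .zero := by
      intro h0
      apply hs
      simp [KTerm.norm, h0]
    have hb : b.norm ≠ .zero := by
      intro h0
      apply hs
      simp only [KTerm.norm, h0]
    cases h' with
    | mul h1 h2 => exact (iha ha _ _ h1).trans (ihb hb _ _ h2)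
  | @add a b n m _ _ iha ihb =>
    intro hs n' m' h'
    cases h' with
    | add h1 h2 =>
      by_cases ha : a.norm = .zero
      · by_cases hb : b.norm = .zero
        · exact absurd (by simp [KTerm.norm, ha, hb]) hs
        · exact ihb hb _ _ h2
      · exact iha ha _ _ h1
  | star _ _ =>
    intro _ n' m' h'
    cases h'
    exact Iff.rfl

/-- The typing judgement yields reflexivity. -/
theorem KTyp.refl {X T : Type} {Γ : X → T × T} {a : KTerm X} {n m : T}
    (h : KTyp Γ a n m) : KEqS Γ a a n m := by
  induction h with
  | var x n m hx => exact .var x n m hx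
  | one n => exact .one n
  | zero n m => exact .zero n m
  | mul _ _ iha ihb => exact .mul iha ihb
  | add _ _ iha ihb => exact .add iha ihb
  | star _ ih => exact .star ih

/-- Strict equality, over any environment, preserves typings in `Γ` in both directions,
and can be retyped in `Γ` as soon as one side is typeable. -/
theorem KEqS.retype {X S T : Type} {Δ : X → S × S} (Γ : X → T × T) {a b : KTerm X} {u v : S}
    (h : KEqS Δ a b u v) :
    ∀ n m, (KTyp Γ a n m → KTyp Γ b n m ∧ KEqS Γ a b n m) ∧
      (KTyp Γ b n m → KTyp Γ a n m ∧ KEqS Γ a b n m) := by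
  induction h with
  | var x => exact fun n m => ⟨fun h => ⟨h, h.refl⟩, fun h => ⟨h, h.refl⟩⟩
  | one => exact fun n m => ⟨fun h => ⟨h, h.refl⟩, fun h => ⟨h, h.refl⟩⟩
  | zero => exact fun n m => ⟨fun h => ⟨h, h.refl⟩, fun h => ⟨h, h.refl⟩⟩
  | symm _ ih =>
    exact fun n m => ⟨fun h => ⟨((ih n m).2 h).1, ((ih n m).2 h).2.symm⟩,
      fun h => ⟨((ih n m).1 h).1, ((ih n m).1 h).2.symm⟩⟩
  | trans _ _ ih1 ih2 =>
    intro n m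
    constructor
    · intro h
      obtain ⟨h1, e1⟩ := (ih1 n m).1 h
      obtain ⟨h2, e2⟩ := (ih2 n m).1 h1
      exact ⟨h2, e1.trans e2⟩
    · intro h
      obtain ⟨h2, e2⟩ := (ih2 n m).2 h
      obtain ⟨h1, e1⟩ := (ih1 n m).2 h2
      exact ⟨h1, e1.trans e2⟩
  | mul _ _ ih1 ih2 =>
    intro n m
    constructor
    · rintro (_ | _ | _ | ⟨h1, h2⟩)
      obtain ⟨h1, e1⟩ := (ih1 _ _).1 h1
      obtain ⟨h2, e2⟩ := (ih2 _ _).1 h2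
      exact ⟨h1.mul h2, e1.mul e2⟩
    · rintro (_ | _ | _ | ⟨h1, h2⟩)
      obtain ⟨h1, e1⟩ := (ih1 _ _).2 h1
      obtain ⟨h2, e2⟩ := (ih2 _ _).2 h2
      exact ⟨h1.mul h2, e1.mul e2⟩
  | add _ _ ih1 ih2 =>
    intro n m
    constructor
    · intro h
      cases h with
      | add h1 h2 =>
        obtain ⟨h1, e1⟩ := (ih1 _ _).1 h1
        obtain ⟨h2, e2⟩ := (ih2 _ _).1 h2
        exact ⟨h1.add h2, e1.add e2⟩
    · intro h
      cases h with
      | add h1 h2 =>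
        obtain ⟨h1, e1⟩ := (ih1 _ _).2 h1
        obtain ⟨h2, e2⟩ := (ih2 _ _).2 h2
        exact ⟨h1.add h2, e1.add e2⟩
  | star _ ih =>
    intro n m
    constructor
    · intro h
      cases h with
      | star h =>
        obtain ⟨h1, e1⟩ := (ih _ _).1 h
        exact ⟨h1.star, e1.star⟩
    · intro h
      cases h with
      | star h =>
        obtain ⟨h1, e1⟩ := (ih _ _).2 h
        exact ⟨h1.star, e1.star⟩
  | one_mul _ =>
    intro n m
    constructor
    · intro h
      cases h with
      | mul h1 h2 =>
        cases h1
        exact ⟨h2, .one_mul h2⟩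
    · exact fun h => ⟨(KTyp.one n).mul h, .one_mul h⟩
  | mul_one _ =>
    intro n m
    constructor
    · intro h
      cases h with
      | mul h1 h2 =>
        cases h2
        exact ⟨h1, .mul_one h1⟩
    · exact fun h => ⟨h.mul (KTyp.one m), .mul_one h⟩
  | mul_assoc _ _ _ =>
    intro n m
    constructor
    · intro h
      cases h with
      | mul h1 h3 =>
        cases h1 with
        | mul h1 h2 => exact ⟨h1.mul (h2.mul h3), .mul_assoc h1 h2 h3⟩
    · intro h
      cases h with
      | mul h1 h2 =>
        cases h2 with
        | mul h2 h3 => exact ⟨(h1.mul h2).mul h3, .mul_assoc h1 h2 h3⟩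
  | add_zero _ =>
    intro n m
    constructor
    · intro h
      cases h with
      | add h1 h2 => exact ⟨h1, .add_zero h1⟩
    · exact fun h => ⟨h.add (KTyp.zero n m), .add_zero h⟩
  | add_comm _ _ =>
    intro n m
    constructor
    · intro h
      cases h with
      | add h1 h2 => exact ⟨h2.add h1, .add_comm h1 h2⟩
    · intro h
      cases h with
      | add h1 h2 => exact ⟨h2.add h1, .add_comm h2 h1⟩
  | add_assoc _ _ _ =>
    intro n m
    constructor
    · intro h
      cases h with
      | add h1 h3 =>
        cases h1 with
        | add h1 h2 => exact ⟨h1.add (h2.add h3), .add_assoc h1 h2 h3⟩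
    · intro h
      cases h with
      | add h1 h2 =>
        cases h2 with
        | add h2 h3 => exact ⟨(h1.add h2).add h3, .add_assoc h1 h2 h3⟩
  | mul_add _ _ _ hs =>
    intro n m
    constructor
    · intro h
      cases h with
      | mul h1 h2 =>
        cases h2 with
        | add h2 h3 => exact ⟨(h1.mul h2).add (h1.mul h3), .mul_add h1 h2 h3 hs⟩
    · intro h
      cases h with
      | add h h' =>
        cases h with
        | mul h1 h2 =>
          cases h' with
          | mul h1' h3 =>
            obtain rfl := (h1.strict_unique hs _ _ h1').1 rfl
            exact ⟨h1.mul (h2.add h3), .mul_add h1 h2 h3 hs⟩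
  | add_mul _ _ _ hs =>
    intro n m
    constructor
    · intro h
      cases h with
      | mul h1 h2 =>
        cases h1 with
        | add h1 h3 => exact ⟨(h1.mul h2).add (h3.mul h2), .add_mul h2 h1 h3 hs⟩
    · intro h
      cases h with
      | add h h' =>
        cases h with
        | mul h1 h2 =>
          cases h' with
          | mul h3 h2' =>
            obtain rfl := (h2.strict_unique hs _ _ h2').2 rfl
            exact ⟨(h1.add h3).mul h2, .add_mul h2 h1 h3 hs⟩
  | add_idem _ =>
    intro n m
    constructor
    · intro h
      cases h with
      | add h1 h2 => exact ⟨h1, .add_idem h1⟩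
    · exact fun h => ⟨h.add h, .add_idem h⟩
  | star_unfold _ =>
    intro n m
    constructor
    · intro h
      cases h with
      | add h1 h2 =>
        cases h1
        cases h2 with
        | mul h2 h3 =>
          cases h3 with
          | star h3 => exact ⟨h3.star, .star_unfold h3⟩
    · intro h
      cases h with
      | star h => exact ⟨(KTyp.one n).add (h.mul h.star), .star_unfold h⟩
  | star_ind_l _ hs ih =>
    intro n m
    have key := fun h => (ih n m).2 h
    constructor
    · intro h
      cases h with
      | add h1 h2 => exact ⟨h2, .star_ind_l (key h2).2 hs⟩
    · intro h
      obtain ⟨h', e⟩ := key h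
      cases h' with
      | add h1 h2 =>
        cases h1 with
        | mul h1 h3 =>
          obtain rfl := (h2.strict_unique hs _ _ h3).2 rfl
          exact ⟨(h1.star.mul h).add h, .star_ind_l e hs⟩
  | star_ind_r _ hs ih =>
    intro n m
    have key := fun h => (ih n m).2 h
    constructor
    · intro h
      cases h with
      | add h1 h2 => exact ⟨h2, .star_ind_r (key h2).2 hs⟩
    · intro h
      obtain ⟨h', e⟩ := key h
      cases h' with
      | add h1 h2 =>
        cases h1 with
        | mul h3 h1 =>
          obtain rfl := (h2.strict_unique hs _ _ h3).1 rfl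
          exact ⟨(h.mul h1.star).add h, .star_ind_r e hs⟩

/-- Untyping theorem for strict Kleene algebra equality: if the untyped strict
equality `⊢ a =⁺ b` is derivable (i.e. the strict equality over the singleton set of
objects) and both `a : n→m` and `b : n→m` are derivable in environment `Γ`, then the
typed strict equality `a =⁺ b : n→m` is derivable in `Γ`. -/
theorem kleene_strict_untyping {X T : Type} (Γ : X → T × T)
    (a b : KTerm X) (n m : T) :
    KEqS (fun _ : X => ((), ())) a b () () →
    KTyp Γ a n m → KTyp Γ b n m →
    KEqS Γ a b n m := by
  intro h ha _
  exact ((h.retype Γ n m).1 ha).2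
end

section
/- Factorisation for Kleene algebras: if the untyped Kleene algebra equality ⊢ a = b is derivable, then the untyped strict equality ⊢ ⌊a⌋ =⁺ ⌊b⌋ of the normal forms is derivable. -/
namespace KFact

variable {X : Type}

theorem typ (a : KTerm X) (n m : Unit) : KTyp (fun _ : X => ((), ())) a n m := by
  induction a generalizing n m with
  | var x => exact .var x _ _ rfl
  | one => exact .one _
  | zero => exact .zero _ _
  | mul a b iha ihb => exact .mul (iha n ()) (ihb () m)
  | add a b iha ihb => exact .add (iha n m) (ihb n m)
  | star a ih => exact .star (ih n n)

theorem rfl' (a : KTerm X) (n m : Unit) : KEqS (fun _ : X => ((), ())) a a n m :=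
  .trans (.symm (.add_idem (typ a n m))) (.add_idem (typ a n m))

theorem mul_l {a b : KTerm X} (h : a.norm = .zero) : (KTerm.mul a b).norm = .zero := by
  simp [KTerm.norm, h]

theorem mul_r {a b : KTerm X} (h : b.norm = .zero) : (KTerm.mul a b).norm = .zero := by
  simp only [KTerm.norm, h]
  split <;> simp_all

theorem mul_n {a b : KTerm X} (h : a.norm ≠ .zero) (h' : b.norm ≠ .zero) :
    (KTerm.mul a b).norm = .mul a.norm b.norm := by
  simp only [KTerm.norm]

theorem add_l {a b : KTerm X} (h : a.norm = .zero) : (KTerm.add a b).norm = b.norm := by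
  simp [KTerm.norm, h]

theorem add_r {a b : KTerm X} (h : b.norm = .zero) : (KTerm.add a b).norm = a.norm := by
  simp only [KTerm.norm, h]
  split <;> simp_all

theorem add_n {a b : KTerm X} (h : a.norm ≠ .zero) (h' : b.norm ≠ .zero) :
    (KTerm.add a b).norm = .add a.norm b.norm := by
  simp only [KTerm.norm]

theorem star_z {a : KTerm X} (h : a.norm = .zero) : (KTerm.star a).norm = .one := by
  simp [KTerm.norm, h]

theorem star_n {a : KTerm X} (h : a.norm ≠ .zero) :
    (KTerm.star a).norm = .star a.norm := by
  simp only [KTerm.norm]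

theorem norm_one : (KTerm.one : KTerm X).norm = .one := rfl
theorem norm_zero : (KTerm.zero : KTerm X).norm = .zero := rfl

theorem mul_iff {a b : KTerm X} :
    (KTerm.mul a b).norm = .zero ↔ a.norm = .zero ∨ b.norm = .zero := by
  by_cases h : a.norm = .zero
  · simp [h, mul_l h]
  by_cases h' : b.norm = .zero
  · simp [h', mul_r h']
  simp [mul_n h h', h, h']

theorem add_iff {a b : KTerm X} :
    (KTerm.add a b).norm = .zero ↔ a.norm = .zero ∧ b.norm = .zero := by
  by_cases h : a.norm = .zero
  · simp [h, add_l h]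
  by_cases h' : b.norm = .zero
  · simp [h', add_r h']
  simp [add_n h h', h, h']

theorem star_iff {a : KTerm X} : (KTerm.star a).norm ≠ .zero := by
  by_cases h : a.norm = .zero
  · simp [star_z h]
  simp [star_n h]

theorem norm_norm (a : KTerm X) : a.norm.norm = a.norm := by
  induction a with
  | var x => rfl
  | one => rfl
  | zero => rfl
  | mul a b iha ihb =>
    by_cases h : a.norm = .zero
    · simp [mul_l h, norm_zero]
    by_cases h' : b.norm = .zero
    · simp [mul_r h', norm_zero]
    rw [mul_n h h', mul_n (by rwa [iha]) (by rwa [ihb]), iha, ihb]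
  | add a b iha ihb =>
    by_cases h : a.norm = .zero
    · rw [add_l h, ihb]
    by_cases h' : b.norm = .zero
    · rw [add_r h', iha]
    rw [add_n h h', add_n (by rwa [iha]) (by rwa [ihb]), iha, ihb]
  | star a ih =>
    by_cases h : a.norm = .zero
    · simp [star_z h, norm_one]
    rw [star_n h, star_n (by rwa [ih]), ih]

theorem zero_iff {a b : KTerm X} {n m : Unit} (h : KEq (fun _ : X => ((), ())) a b n m) :
    a.norm = .zero ↔ b.norm = .zero := by
  induction h <;> simp_all [mul_iff, add_iff, star_iff, norm_one, norm_zero] <;> tauto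

theorem main {a b : KTerm X} {n m : Unit} (h : KEq (fun _ : X => ((), ())) a b n m) :
    KEqS (fun _ : X => ((), ())) a.norm b.norm n m := by
  induction h with
  | var x n m h => exact rfl' _ _ _
  | symm _ ih => exact .symm ih
  | trans _ _ ih ih' => exact .trans ih ih'
  | one => exact rfl' _ _ _
  | zero => exact rfl' _ _ _
  | @mul a a' b b' n m p h h' ih ih' =>
    have e := zero_iff h
    have e' := zero_iff h'
    by_cases ha : a.norm = .zero
    · rw [mul_l ha, mul_l (e.1 ha)]; exact rfl' _ _ _
    by_cases hb : b.norm = .zero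
    · rw [mul_r hb, mul_r (e'.1 hb)]; exact rfl' _ _ _
    rw [mul_n ha hb, mul_n (by rwa [ne_eq, ← e]) (by rwa [ne_eq, ← e'])]
    exact .mul ih ih'
  | @add a a' b b' n m h h' ih ih' =>
    have e := zero_iff h
    have e' := zero_iff h'
    by_cases ha : a.norm = .zero
    · rw [add_l ha, add_l (e.1 ha)]; exact ih'
    by_cases hb : b.norm = .zero
    · rw [add_r hb, add_r (e'.1 hb)]; exact ih
    rw [add_n ha hb, add_n (by rwa [ne_eq, ← e]) (by rwa [ne_eq, ← e'])]
    exact .add ih ih'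
  | @star a b n h ih =>
    have e := zero_iff h
    by_cases ha : a.norm = .zero
    · rw [star_z ha, star_z (e.1 ha)]; exact rfl' _ _ _
    rw [star_n ha, star_n (by rwa [ne_eq, ← e])]
    exact .star ih
  | @one_mul a n m =>
    by_cases ha : a.norm = .zero
    · rw [mul_r ha, ha]; exact rfl' _ _ _
    rw [mul_n (by simp [norm_one]) ha]
    exact .one_mul (typ _ _ _)
  | @mul_one a n m =>
    by_cases ha : a.norm = .zero
    · rw [mul_l ha, ha]; exact rfl' _ _ _
    rw [mul_n ha (by simp [norm_one])]
    exact .mul_one (typ _ _ _)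
  | @mul_assoc a b c n m p q =>
    by_cases ha : a.norm = .zero
    · rw [mul_l (mul_l ha), mul_l ha]; exact rfl' _ _ _
    by_cases hb : b.norm = .zero
    · rw [mul_l (mul_r hb), mul_r (mul_l hb)]; exact rfl' _ _ _
    by_cases hc : c.norm = .zero
    · rw [mul_r hc, mul_r (mul_r hc)]; exact rfl' _ _ _
    rw [mul_n (by simp [mul_iff, *]) hc, mul_n ha hb, mul_n ha (by simp [mul_iff, *]), mul_n hb hc]
    exact .mul_assoc (typ _ _ ()) (typ _ () ()) (typ _ () _)
  | add_zero => rw [add_r norm_zero]; exact rfl' _ _ _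
  | @add_comm a b n m =>
    by_cases ha : a.norm = .zero
    · rw [add_l ha, add_r ha]; exact rfl' _ _ _
    by_cases hb : b.norm = .zero
    · rw [add_l hb, add_r hb]; exact rfl' _ _ _
    rw [add_n ha hb, add_n hb ha]
    exact .add_comm (typ _ _ _) (typ _ _ _)
  | @add_assoc a b c n m =>
    have key : ((a.add b).add c).norm = (a.add (b.add c)).norm ∨
        (a.norm ≠ .zero ∧ b.norm ≠ .zero ∧ c.norm ≠ .zero) := by
      by_cases ha : a.norm = .zero
      · left; rw [add_l ha]; simp only [KTerm.norm, ha]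
      by_cases hb : b.norm = .zero
      · left
        have h1 := add_r (a := a) hb
        have h2 := add_l (b := c) hb
        rw [KTerm.norm, h1, KTerm.norm, h2]
      by_cases hc : c.norm = .zero
      · left
        have h2 := add_r (a := b) hc
        rw [add_r hc, KTerm.norm, KTerm.norm, h2]
      exact .inr ⟨ha, hb, hc⟩
    rcases key with h | ⟨ha, hb, hc⟩
    · rw [h]; exact rfl' _ _ _
    rw [add_n (by simp [add_iff, *]) hc, add_n ha hb, add_n ha (by simp [add_iff, *]), add_n hb hc]
    exact .add_assoc (typ _ _ _) (typ _ _ _) (typ _ _ _)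
  | @mul_add a b c n m p =>
    by_cases ha : a.norm = .zero
    · rw [mul_l ha, add_l (mul_l ha), mul_l ha]; exact rfl' _ _ _
    by_cases hb : b.norm = .zero
    · rw [add_l (mul_r hb), KTerm.norm, add_l hb, KTerm.norm]; exact rfl' _ _ _
    by_cases hc : c.norm = .zero
    · rw [add_r (mul_r hc), KTerm.norm, add_r hc, KTerm.norm]; exact rfl' _ _ _
    rw [mul_n ha (by simp [add_iff, *]), add_n hb hc,
      add_n (by simp [mul_iff, *]) (by simp [mul_iff, *]), mul_n ha hb, mul_n ha hc]
    exact .mul_add (typ _ _ ()) (typ _ _ _) (typ _ _ _) (by rwa [norm_norm])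
  | @add_mul a b c n m p =>
    by_cases ha : a.norm = .zero
    · rw [mul_r ha, add_l (mul_r ha), mul_r ha]; exact rfl' _ _ _
    by_cases hb : b.norm = .zero
    · rw [add_l (mul_l hb), KTerm.norm, add_l hb, KTerm.norm]; exact rfl' _ _ _
    by_cases hc : c.norm = .zero
    · rw [add_r (mul_l hc), KTerm.norm, add_r hc, KTerm.norm]; exact rfl' _ _ _
    rw [mul_n (by simp [add_iff, *]) ha, add_n hb hc,
      add_n (by simp [mul_iff, *]) (by simp [mul_iff, *]), mul_n hb ha, mul_n hc ha]
    exact .add_mul (typ _ () _) (typ _ _ _) (typ _ _ _) (by rwa [norm_norm])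
  | mul_zero => rw [mul_r norm_zero]; exact rfl' _ _ _
  | zero_mul => rw [mul_l norm_zero]; exact rfl' _ _ _
  | @add_idem a n m =>
    by_cases ha : a.norm = .zero
    · rw [add_l ha]; exact rfl' _ _ _
    rw [add_n ha ha]
    exact .add_idem (typ _ _ _)
  | @star_unfold a n =>
    by_cases ha : a.norm = .zero
    · rw [add_r (mul_l ha), star_z ha]; exact rfl' _ _ _
    rw [add_n (by simp [norm_one]) (by simp [mul_iff, star_iff, *]), mul_n ha star_iff, star_n ha]
    exact .star_unfold (typ _ _ _)
  | @star_ind_l a b n m h ih =>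
    by_cases hb : b.norm = .zero
    · rw [add_r hb, mul_r hb, hb]; exact rfl' _ _ _
    rw [add_n (by simp [mul_iff, star_iff, *]) hb, mul_n star_iff hb]
    by_cases ha : a.norm = .zero
    · rw [star_z ha]
      exact .trans (.add (.one_mul (typ _ _ _)) (rfl' _ _ _)) (.add_idem (typ _ _ _))
    rw [star_n ha]
    rw [add_n (by simp [mul_iff, *]) hb, mul_n ha hb] at ih
    exact .star_ind_l ih (by rwa [norm_norm])
  | @star_ind_r a b n m h ih =>
    by_cases hb : b.norm = .zero
    · rw [add_r hb, mul_l hb, hb]; exact rfl' _ _ _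
    rw [add_n (by simp [mul_iff, star_iff, *]) hb, mul_n hb star_iff]
    by_cases ha : a.norm = .zero
    · rw [star_z ha]
      exact .trans (.add (.mul_one (typ _ _ _)) (rfl' _ _ _)) (.add_idem (typ _ _ _))
    rw [star_n ha]
    rw [add_n (by simp [mul_iff, *]) hb, mul_n hb ha] at ih
    exact .star_ind_r ih (by rwa [norm_norm])

end KFact

/-- Factorisation for Kleene algebras: if the untyped Kleene algebra equality
`⊢ a = b` is derivable (i.e. the equality over the singleton set of objects), then
the untyped strict equality `⊢ ⌊a⌋ =⁺ ⌊b⌋` of the normal forms is derivable. -/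
theorem kleene_factorisation {X : Type} (a b : KTerm X) :
    KEq (fun _ : X => ((), ())) a b () () →
    KEqS (fun _ : X => ((), ())) a.norm b.norm () () :=
  fun h => KFact.main h
end

section
/- Untyping theorem for Kleene algebras: for all terms a,b and objects n,m such that a : n→m and b : n→m are derivable in environment Γ, the untyped equality ⊢ a = b is derivable if and only if the typed equality a = b : n→m is derivable in Γ. -/
namespace KU
variable {X T : Type} {Γ : X → T × T}

/-- zero-free terms -/
def ZF : KTerm X → Prop
  | .var _ => True
  | .one => True
  | .zero => False
  | .mul a b => ZF a ∧ ZF b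
  | .add a b => ZF a ∧ ZF b
  | .star a => ZF a

theorem ZF.ne {a : KTerm X} (h : ZF a) : a ≠ .zero := by
  rintro rfl; exact h

theorem typ_mul {a b : KTerm X} {n p : T} :
    KTyp Γ (.mul a b) n p ↔ ∃ m, KTyp Γ a n m ∧ KTyp Γ b m p :=
  ⟨fun h => by cases h with | mul h1 h2 => exact ⟨_, h1, h2⟩, fun ⟨_, h1, h2⟩ => .mul h1 h2⟩

theorem typ_add {a b : KTerm X} {n m : T} :
    KTyp Γ (.add a b) n m ↔ KTyp Γ a n m ∧ KTyp Γ b n m :=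
  ⟨fun h => by cases h with | add h1 h2 => exact ⟨h1, h2⟩, fun ⟨h1, h2⟩ => .add h1 h2⟩

theorem typ_star {a : KTerm X} {n m : T} :
    KTyp Γ (.star a) n m ↔ n = m ∧ KTyp Γ a n n :=
  ⟨fun h => by cases h with | star h1 => exact ⟨rfl, h1⟩, fun ⟨e, h1⟩ => by subst e; exact .star h1⟩

theorem typ_one {n m : T} : KTyp Γ (.one : KTerm X) n m ↔ n = m :=
  ⟨fun h => by cases h; rfl, fun e => by subst e; exact .one _⟩

theorem typ_var {x : X} {n m : T} : KTyp Γ (.var x) n m ↔ Γ x = (n, m) :=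
  ⟨fun h => by cases h; assumption, fun e => .var _ _ _ e⟩

theorem refl {a : KTerm X} {n m : T} (h : KTyp Γ a n m) : KEq Γ a a n m := by
  induction h with
  | var x n m h => exact .var x n m h
  | one n => exact .one n
  | zero n m => exact .zero n m
  | mul _ _ h1 h2 => exact .mul h1 h2
  | add _ _ h1 h2 => exact .add h1 h2
  | star _ h1 => exact .star h1

theorem inj {a : KTerm X} (hz : ZF a) {n m n' m' : T} (h : KTyp Γ a n m)
    (h' : KTyp Γ a n' m') : n = n' ↔ m = m' := by
  induction h generalizing n' m' with
  | var x n m h => rw [typ_var, h] at h'; simp_all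
  | one n => rw [typ_one] at h'; simp_all
  | zero n m => exact hz.elim
  | mul _ _ h1 h2 =>
    obtain ⟨k, h3, h4⟩ := typ_mul.1 h'
    exact (h1 hz.1 h3).trans (h2 hz.2 h4)
  | add _ _ h1 h2 => exact h1 hz.1 (typ_add.1 h').1
  | star _ h1 =>
    obtain ⟨rfl, h3⟩ := typ_star.1 h'
    exact h1 hz h3

theorem norm_mul_zl {a b : KTerm X} (ha : a.norm = .zero) : (KTerm.mul a b).norm = .zero := by
  simp [KTerm.norm, ha]

theorem norm_mul_zr {a b : KTerm X} (hb : b.norm = .zero) : (KTerm.mul a b).norm = .zero := by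
  simp only [KTerm.norm, hb]; cases a.norm <;> rfl

theorem norm_mul {a b : KTerm X} (ha : a.norm ≠ .zero) (hb : b.norm ≠ .zero) :
    (KTerm.mul a b).norm = .mul a.norm b.norm := by
  rw [KTerm.norm]; cases h : a.norm <;> cases h' : b.norm <;> simp_all

theorem norm_add_zl {a b : KTerm X} (ha : a.norm = .zero) : (KTerm.add a b).norm = b.norm := by
  simp [KTerm.norm, ha]

theorem norm_add_zr {a b : KTerm X} (hb : b.norm = .zero) : (KTerm.add a b).norm = a.norm := by
  simp only [KTerm.norm, hb]; cases a.norm <;> rfl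

theorem norm_add {a b : KTerm X} (ha : a.norm ≠ .zero) (hb : b.norm ≠ .zero) :
    (KTerm.add a b).norm = .add a.norm b.norm := by
  rw [KTerm.norm]; cases h : a.norm <;> cases h' : b.norm <;> simp_all

theorem norm_star_z {a : KTerm X} (ha : a.norm = .zero) : (KTerm.star a).norm = .one := by
  simp [KTerm.norm, ha]

theorem norm_star {a : KTerm X} (ha : a.norm ≠ .zero) :
    (KTerm.star a).norm = .star a.norm := by
  rw [KTerm.norm]; cases h : a.norm <;> simp_all

theorem norm_one : (KTerm.one : KTerm X).norm = .one := rfl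
theorem norm_zero : (KTerm.zero : KTerm X).norm = .zero := rfl

theorem z_or (a : KTerm X) : a.norm = .zero ∨ (a.norm ≠ .zero ∧ ZF a.norm) := by
  induction a with
  | var x => exact .inr ⟨by simp [KTerm.norm], trivial⟩
  | one => exact .inr ⟨by simp [KTerm.norm], trivial⟩
  | zero => exact .inl rfl
  | mul a b iha ihb =>
    rcases iha with ha | ⟨ha, ha'⟩
    · exact .inl (norm_mul_zl ha)
    rcases ihb with hb | ⟨hb, hb'⟩
    · exact .inl (norm_mul_zr hb)
    · rw [norm_mul ha hb]; exact .inr ⟨by simp, ha', hb'⟩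
  | add a b iha ihb =>
    rcases iha with ha | ⟨ha, ha'⟩
    · rw [norm_add_zl ha]; exact ihb
    rcases ihb with hb | ⟨hb, hb'⟩
    · rw [norm_add_zr hb]; exact .inr ⟨ha, ha'⟩
    · rw [norm_add ha hb]; exact .inr ⟨by simp, ha', hb'⟩
  | star a iha =>
    rcases iha with ha | ⟨ha, ha'⟩
    · rw [norm_star_z ha]; exact .inr ⟨by simp, trivial⟩
    · rw [norm_star ha]; exact .inr ⟨by simp, ha'⟩

theorem zero_add {a : KTerm X} {n m : T} (h : KTyp Γ a n m) : KEq Γ (.add .zero a) a n m :=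
  .trans (.add_comm (.zero _ _) h) (.add_zero h)

/-- `0* = 1` -/
theorem star_zero (n : T) : KEq Γ (.star .zero) (.one : KTerm X) n n :=
  .trans (.symm (.star_unfold (.zero n n)))
    (.trans (.add (.one n) (.zero_mul (.star (.zero n n)))) (.add_zero (.one n)))

theorem norm_typ_eq {a : KTerm X} {n m : T} (h : KTyp Γ a n m) :
    KTyp Γ a.norm n m ∧ KEq Γ a a.norm n m := by
  induction h with
  | var x n m h => exact ⟨.var _ _ _ h, .var _ _ _ h⟩
  | one n => exact ⟨.one _, .one _⟩
  | zero n m => exact ⟨.zero _ _, .zero _ _⟩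
  | @mul a b n m p h1 h2 ih1 ih2 =>
    have key := KEq.mul ih1.2 ih2.2
    rcases z_or a with ha | ⟨ha, -⟩
    · rw [norm_mul_zl ha]; rw [ha] at key
      exact ⟨.zero _ _, .trans key (.zero_mul ih2.1)⟩
    rcases z_or b with hb | ⟨hb, -⟩
    · rw [norm_mul_zr hb]; rw [hb] at key
      exact ⟨.zero _ _, .trans key (.mul_zero ih1.1)⟩
    rw [norm_mul ha hb]
    exact ⟨.mul ih1.1 ih2.1, key⟩
  | @add a b n m h1 h2 ih1 ih2 =>
    have key := KEq.add ih1.2 ih2.2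
    rcases z_or a with ha | ⟨ha, -⟩
    · rw [norm_add_zl ha]; rw [ha] at key
      exact ⟨ih2.1, .trans key (zero_add ih2.1)⟩
    rcases z_or b with hb | ⟨hb, -⟩
    · rw [norm_add_zr hb]; rw [hb] at key
      exact ⟨ih1.1, .trans key (.add_zero ih1.1)⟩
    rw [norm_add ha hb]
    exact ⟨.add ih1.1 ih2.1, key⟩
  | @star a n h ih =>
    have key := KEq.star ih.2
    rcases z_or a with ha | ⟨ha, -⟩
    · rw [norm_star_z ha]; rw [ha] at key
      exact ⟨.one _, .trans key (star_zero n)⟩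
    rw [norm_star ha]
    exact ⟨.star ih.1, key⟩

/-- The invariant relating normal forms of untyped-equal terms. -/
def R (Γ : X → T × T) (u v : KTerm X) : Prop :=
  (u = .zero ↔ v = .zero) ∧ ∀ n m, (KTyp Γ u n m ↔ KTyp Γ v n m) ∧ (KTyp Γ u n m → KEq Γ u v n m)

theorem R.rfl (u : KTerm X) : R Γ u u := ⟨Iff.rfl, fun _ _ => ⟨Iff.rfl, refl⟩⟩

theorem R.symm {u v : KTerm X} (h : R Γ u v) : R Γ v u :=
  ⟨h.1.symm, fun n m => ⟨(h.2 n m).1.symm, fun t => .symm ((h.2 n m).2 ((h.2 n m).1.2 t))⟩⟩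

theorem R.trans {u v w : KTerm X} (h : R Γ u v) (h' : R Γ v w) : R Γ u w :=
  ⟨h.1.trans h'.1, fun n m => ⟨(h.2 n m).1.trans (h'.2 n m).1,
    fun t => .trans ((h.2 n m).2 t) ((h'.2 n m).2 ((h.2 n m).1.1 t))⟩⟩

theorem R.mk {u v : KTerm X} (hu : u ≠ .zero) (hv : v ≠ .zero)
    (h1 : ∀ n m, KTyp Γ u n m → KTyp Γ v n m ∧ KEq Γ u v n m)
    (h2 : ∀ n m, KTyp Γ v n m → KTyp Γ u n m) : R Γ u v :=
  ⟨by simp [hu, hv], fun n m => ⟨⟨fun t => (h1 n m t).1, h2 n m⟩, fun t => (h1 n m t).2⟩⟩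

theorem R.mul {a a' b b' : KTerm X} (h : R Γ a a') (k : R Γ b b') :
    R Γ (.mul a b) (.mul a' b') := by
  refine R.mk (by simp) (by simp) ?_ ?_ <;> intro n m t <;> obtain ⟨p, t1, t2⟩ := typ_mul.1 t
  · exact ⟨.mul ((h.2 _ _).1.1 t1) ((k.2 _ _).1.1 t2), .mul ((h.2 _ _).2 t1) ((k.2 _ _).2 t2)⟩
  · exact .mul ((h.2 _ _).1.2 t1) ((k.2 _ _).1.2 t2)

theorem R.add {a a' b b' : KTerm X} (h : R Γ a a') (k : R Γ b b') :
    R Γ (.add a b) (.add a' b') := by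
  refine R.mk (by simp) (by simp) ?_ ?_ <;> intro n m t <;> obtain ⟨t1, t2⟩ := typ_add.1 t
  · exact ⟨.add ((h.2 _ _).1.1 t1) ((k.2 _ _).1.1 t2), .add ((h.2 _ _).2 t1) ((k.2 _ _).2 t2)⟩
  · exact .add ((h.2 _ _).1.2 t1) ((k.2 _ _).1.2 t2)

theorem R.star {a a' : KTerm X} (h : R Γ a a') : R Γ (.star a) (.star a') := by
  refine R.mk (by simp) (by simp) ?_ ?_ <;> intro n m t <;> obtain ⟨rfl, t1⟩ := typ_star.1 t
  · exact ⟨.star ((h.2 _ _).1.1 t1), .star ((h.2 _ _).2 t1)⟩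
  · exact .star ((h.2 _ _).1.2 t1)

theorem R.one_mul {a : KTerm X} (ha : a ≠ .zero) : R Γ (.mul .one a) a := by
  refine R.mk (by simp) ha ?_ ?_ <;> intro n m t
  · obtain ⟨p, t1, t2⟩ := typ_mul.1 t
    obtain rfl := typ_one.1 t1
    exact ⟨t2, .one_mul t2⟩
  · exact .mul (.one _) t

theorem R.mul_one {a : KTerm X} (ha : a ≠ .zero) : R Γ (.mul a .one) a := by
  refine R.mk (by simp) ha ?_ ?_ <;> intro n m t
  · obtain ⟨p, t1, t2⟩ := typ_mul.1 t
    obtain rfl := typ_one.1 t2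
    exact ⟨t1, .mul_one t1⟩
  · exact .mul t (.one _)

theorem R.add_idem {a : KTerm X} (ha : a ≠ .zero) : R Γ (.add a a) a := by
  refine R.mk (by simp) ha ?_ ?_ <;> intro n m t
  · obtain ⟨t1, -⟩ := typ_add.1 t
    exact ⟨t1, .add_idem t1⟩
  · exact .add t t

/-- Main lemma: untyped equality gives the invariant on normal forms. -/
theorem norm_rel (Γ : X → T × T) {a b : KTerm X} {i j : Unit}
    (h : KEq (fun _ : X => ((), ())) a b i j) : R Γ a.norm b.norm := by
  induction h with
  | var x => exact R.rfl _
  | symm _ ih => exact ih.symm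
  | trans _ _ ih1 ih2 => exact ih1.trans ih2
  | one => exact R.rfl _
  | zero => exact R.rfl _
  | @mul a a' b b' n m p _ _ h k =>
    rcases z_or a with ha | ⟨ha, -⟩
    · rw [norm_mul_zl ha, norm_mul_zl (h.1.1 ha)]; exact R.rfl _
    rcases z_or b with hb | ⟨hb, -⟩
    · rw [norm_mul_zr hb, norm_mul_zr (k.1.1 hb)]; exact R.rfl _
    rw [norm_mul ha hb, norm_mul (mt h.1.2 ha) (mt k.1.2 hb)]
    exact h.mul k
  | @add a a' b b' n m _ _ h k =>
    rcases z_or a with ha | ⟨ha, -⟩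
    · rw [norm_add_zl ha, norm_add_zl (h.1.1 ha)]; exact k
    rcases z_or b with hb | ⟨hb, -⟩
    · rw [norm_add_zr hb, norm_add_zr (k.1.1 hb)]; exact h
    rw [norm_add ha hb, norm_add (mt h.1.2 ha) (mt k.1.2 hb)]
    exact h.add k
  | @star a b n _ h =>
    rcases z_or a with ha | ⟨ha, -⟩
    · rw [norm_star_z ha, norm_star_z (h.1.1 ha)]; exact R.rfl _
    rw [norm_star ha, norm_star (mt h.1.2 ha)]
    exact h.star
  | @one_mul a =>
    rcases z_or a with ha | ⟨ha, -⟩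
    · rw [norm_mul_zr ha, ha]; exact R.rfl _
    rw [norm_mul (by simp [norm_one]) ha]
    exact R.one_mul ha
  | @mul_one a =>
    rcases z_or a with ha | ⟨ha, -⟩
    · rw [norm_mul_zl ha, ha]; exact R.rfl _
    rw [norm_mul ha (by simp [norm_one])]
    exact R.mul_one ha
  | @mul_assoc a b c =>
    rcases z_or a with ha | ⟨ha, -⟩
    · rw [norm_mul_zl (norm_mul_zl ha), norm_mul_zl ha]; exact R.rfl _
    rcases z_or b with hb | ⟨hb, -⟩
    · rw [norm_mul_zl (norm_mul_zr hb), norm_mul_zr (norm_mul_zl hb)]; exact R.rfl _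
    rcases z_or c with hc | ⟨hc, -⟩
    · rw [norm_mul_zr hc, norm_mul_zr (norm_mul_zr hc)]; exact R.rfl _
    have e1 := norm_mul ha hb
    have e2 := norm_mul hb hc
    rw [norm_mul (a := .mul a b) (by simp [e1]) hc, norm_mul (b := .mul b c) ha (by simp [e2]), e1, e2]
    refine R.mk (by simp) (by simp) ?_ ?_ <;> intro n m t
    · obtain ⟨p, t1, t3⟩ := typ_mul.1 t
      obtain ⟨q, t1, t2⟩ := typ_mul.1 t1
      exact ⟨.mul t1 (.mul t2 t3), .mul_assoc t1 t2 t3⟩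
    · obtain ⟨p, t1, t3⟩ := typ_mul.1 t
      obtain ⟨q, t2, t3⟩ := typ_mul.1 t3
      exact .mul (.mul t1 t2) t3
  | @add_zero a => rw [norm_add_zr norm_zero]; exact R.rfl _
  | @add_comm a b =>
    rcases z_or a with ha | ⟨ha, -⟩
    · rw [norm_add_zl ha, norm_add_zr ha]; exact R.rfl _
    rcases z_or b with hb | ⟨hb, -⟩
    · rw [norm_add_zl hb, norm_add_zr hb]; exact R.rfl _
    rw [norm_add ha hb, norm_add hb ha]
    refine R.mk (by simp) (by simp) ?_ ?_ <;> intro n m t <;> obtain ⟨t1, t2⟩ := typ_add.1 t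
    · exact ⟨.add t2 t1, .add_comm t1 t2⟩
    · exact .add t2 t1
  | @add_assoc a b c =>
    rcases z_or a with ha | ⟨ha, -⟩
    · rw [norm_add_zl ha]
      rcases z_or c with hc | ⟨hc, -⟩
      · rw [norm_add_zr hc, norm_add_zr hc, norm_add_zl ha]; exact R.rfl _
      rcases z_or b with hb | ⟨hb, -⟩
      · rw [norm_add_zl (by rw [norm_add_zl ha, hb]), norm_add_zl hb]; exact R.rfl _
      rw [norm_add (by rwa [norm_add_zl ha]) hc, norm_add hb hc, norm_add_zl ha]; exact R.rfl _
    rcases z_or b with hb | ⟨hb, -⟩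
    · rcases z_or c with hc | ⟨hc, -⟩
      · rw [norm_add_zr hc, norm_add_zr hb, norm_add_zr (by rw [norm_add_zr hc, hb])]; exact R.rfl _
      rw [norm_add (a := .add a b) (by rwa [norm_add_zr hb]) hc,
        norm_add (b := .add b c) ha (by rwa [norm_add_zl hb]),
        norm_add_zr hb, norm_add_zl hb]
      exact R.rfl _
    have e1 := norm_add ha hb
    rcases z_or c with hc | ⟨hc, -⟩
    · rw [norm_add_zr hc, e1, norm_add ha (by rwa [norm_add_zr hc]), norm_add_zr hc]; exact R.rfl _
    have e2 := norm_add hb hc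
    rw [norm_add (a := .add a b) (by simp [e1]) hc, norm_add (b := .add b c) ha (by simp [e2]), e1, e2]
    refine R.mk (by simp) (by simp) ?_ ?_ <;> intro n m t
    · obtain ⟨t1, t3⟩ := typ_add.1 t
      obtain ⟨t1, t2⟩ := typ_add.1 t1
      exact ⟨.add t1 (.add t2 t3), .add_assoc t1 t2 t3⟩
    · obtain ⟨t1, t3⟩ := typ_add.1 t
      obtain ⟨t2, t3⟩ := typ_add.1 t3
      exact .add (.add t1 t2) t3
  | @mul_add a b c =>
    rcases z_or a with ha | ⟨ha, za⟩
    · rw [norm_mul_zl ha, norm_add_zl (norm_mul_zl ha), norm_mul_zl ha]; exact R.rfl _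
    rcases z_or b with hb | ⟨hb, -⟩
    · rw [norm_add_zl (norm_mul_zr hb)]
      rcases z_or c with hc | ⟨hc, -⟩
      · rw [norm_mul_zr hc, norm_mul_zr (by rw [norm_add_zl hb, hc])]; exact R.rfl _
      rw [norm_mul ha (by rwa [norm_add_zl hb]), norm_mul ha hc, norm_add_zl hb]; exact R.rfl _
    rcases z_or c with hc | ⟨hc, -⟩
    · rw [norm_add_zr (norm_mul_zr hc), norm_mul ha (by rwa [norm_add_zr hc]), norm_mul ha hb,
        norm_add_zr hc]
      exact R.rfl _
    have e1 := norm_mul ha hb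
    have e2 := norm_mul ha hc
    have e3 := norm_add hb hc
    rw [norm_mul (b := .add b c) ha (by simp [e3]),
      norm_add (a := .mul a b) (b := .mul a c) (by simp [e1]) (by simp [e2]), e1, e2, e3]
    refine R.mk (by simp) (by simp) ?_ ?_ <;> intro n m t
    · obtain ⟨p, t1, t2⟩ := typ_mul.1 t
      obtain ⟨t2, t3⟩ := typ_add.1 t2
      exact ⟨.add (.mul t1 t2) (.mul t1 t3), .mul_add t1 t2 t3⟩
    · obtain ⟨t1, t2⟩ := typ_add.1 t
      obtain ⟨p, t1, t3⟩ := typ_mul.1 t1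
      obtain ⟨q, t2, t4⟩ := typ_mul.1 t2
      obtain rfl := (inj za t1 t2).1 rfl
      exact .mul t1 (.add t3 t4)
  | @add_mul a b c =>
    rcases z_or a with ha | ⟨ha, za⟩
    · rw [norm_mul_zr ha, norm_add_zl (norm_mul_zr ha), norm_mul_zr ha]; exact R.rfl _
    rcases z_or b with hb | ⟨hb, -⟩
    · rw [norm_add_zl (norm_mul_zl hb)]
      rcases z_or c with hc | ⟨hc, -⟩
      · rw [norm_mul_zl hc, norm_mul_zl (by rw [norm_add_zl hb, hc])]; exact R.rfl _
      rw [norm_mul (by rwa [norm_add_zl hb]) ha, norm_mul hc ha, norm_add_zl hb]; exact R.rfl _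
    rcases z_or c with hc | ⟨hc, -⟩
    · rw [norm_add_zr (norm_mul_zl hc), norm_mul (by rwa [norm_add_zr hc]) ha, norm_mul hb ha,
        norm_add_zr hc]
      exact R.rfl _
    have e1 := norm_mul hb ha
    have e2 := norm_mul hc ha
    have e3 := norm_add hb hc
    rw [norm_mul (a := .add b c) (by simp [e3]) ha,
      norm_add (a := .mul b a) (b := .mul c a) (by simp [e1]) (by simp [e2]), e1, e2, e3]
    refine R.mk (by simp) (by simp) ?_ ?_ <;> intro n m t
    · obtain ⟨p, t1, t2⟩ := typ_mul.1 t
      obtain ⟨t1, t3⟩ := typ_add.1 t1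
      exact ⟨.add (.mul t1 t2) (.mul t3 t2), .add_mul t2 t1 t3⟩
    · obtain ⟨t1, t2⟩ := typ_add.1 t
      obtain ⟨p, t1, t3⟩ := typ_mul.1 t1
      obtain ⟨q, t2, t4⟩ := typ_mul.1 t2
      obtain rfl := (inj za t3 t4).2 rfl
      exact .mul (.add t1 t2) t3
  | @mul_zero a => rw [norm_mul_zr norm_zero]; exact R.rfl _
  | @zero_mul a => rw [norm_mul_zl norm_zero]; exact R.rfl _
  | @add_idem a =>
    rcases z_or a with ha | ⟨ha, -⟩
    · rw [norm_add_zl ha]; exact R.rfl _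
    rw [norm_add ha ha]
    exact R.add_idem ha
  | @star_unfold a =>
    rcases z_or a with ha | ⟨ha, -⟩
    · rw [norm_add_zr (norm_mul_zl ha), norm_star_z ha]; exact R.rfl _
    have e1 := norm_star ha
    have e2 := norm_mul ha (b := .star a) (by simp [e1])
    rw [norm_add (by simp [norm_one]) (by simp [e2]), e2, e1, norm_one]
    refine R.mk (by simp) (by simp) ?_ ?_ <;> intro n m t
    · obtain ⟨t1, t2⟩ := typ_add.1 t
      obtain rfl := typ_one.1 t1
      obtain ⟨p, t2, t3⟩ := typ_mul.1 t2
      obtain ⟨rfl, -⟩ := typ_star.1 t3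
      exact ⟨.star t2, .star_unfold t2⟩
    · obtain ⟨rfl, t1⟩ := typ_star.1 t
      exact .add (.one _) (.mul t1 (.star t1))
  | @star_ind_l a b _ _ _ h =>
    rcases z_or b with hb | ⟨hb, zb⟩
    · rw [norm_add_zr hb, norm_mul_zr hb, hb]; exact R.rfl _
    rcases z_or a with ha | ⟨ha, -⟩
    · have e1 := norm_star_z ha
      have e2 := norm_mul (a := .star a) (by simp [e1]) hb
      rw [norm_add (by simp [e2]) hb, e2, e1]
      exact ((R.one_mul hb).add (R.rfl _)).trans (R.add_idem hb)
    have e1 := norm_star ha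
    have e2 := norm_mul (a := .star a) (by simp [e1]) hb
    have e3 := norm_mul ha hb
    rw [norm_add (by simp [e3]) hb, e3] at h
    rw [norm_add (by simp [e2]) hb, e2, e1]
    have sq : ∀ n m, KTyp Γ b.norm n m → KTyp Γ a.norm n n := by
      intro n m t
      obtain ⟨t1, t2⟩ := typ_add.1 ((h.2 n m).1.2 t)
      obtain ⟨p, t1, t3⟩ := typ_mul.1 t1
      obtain rfl := (inj zb t3 t2).2 rfl
      exact t1
    have back : ∀ n m, KTyp Γ b.norm n m →
        KTyp Γ ((a.norm.star.mul b.norm).add b.norm) n m :=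
      fun n m t => .add (.mul (.star (sq n m t)) t) t
    refine R.mk (by simp) hb ?_ back
    intro n m t
    obtain ⟨-, t2⟩ := typ_add.1 t
    exact ⟨t2, .star_ind_l ((h.2 n m).2 ((h.2 n m).1.2 t2))⟩
  | @star_ind_r a b _ _ _ h =>
    rcases z_or b with hb | ⟨hb, zb⟩
    · rw [norm_add_zr hb, norm_mul_zl hb, hb]; exact R.rfl _
    rcases z_or a with ha | ⟨ha, -⟩
    · have e1 := norm_star_z ha
      have e2 := norm_mul (b := .star a) hb (by simp [e1])
      rw [norm_add (by simp [e2]) hb, e2, e1]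
      exact ((R.mul_one hb).add (R.rfl _)).trans (R.add_idem hb)
    have e1 := norm_star ha
    have e2 := norm_mul (b := .star a) hb (by simp [e1])
    have e3 := norm_mul hb ha
    rw [norm_add (by simp [e3]) hb, e3] at h
    rw [norm_add (by simp [e2]) hb, e2, e1]
    have sq : ∀ n m, KTyp Γ b.norm n m → KTyp Γ a.norm m m := by
      intro n m t
      obtain ⟨t1, t2⟩ := typ_add.1 ((h.2 n m).1.2 t)
      obtain ⟨p, t1, t3⟩ := typ_mul.1 t1
      obtain rfl := (inj zb t1 t2).1 rfl
      exact t3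
    have back : ∀ n m, KTyp Γ b.norm n m →
        KTyp Γ ((b.norm.mul a.norm.star).add b.norm) n m :=
      fun n m t => .add (.mul t (.star (sq n m t))) t
    refine R.mk (by simp) hb ?_ back
    intro n m t
    obtain ⟨-, t2⟩ := typ_add.1 t
    exact ⟨t2, .star_ind_r ((h.2 n m).2 ((h.2 n m).1.2 t2))⟩

theorem erase_typ {a : KTerm X} {n m : T} (h : KTyp Γ a n m) :
    KTyp (fun _ : X => ((), ())) a () () := by
  induction h with
  | var x => exact .var _ _ _ rfl
  | one => exact .one _
  | zero => exact .zero _ _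
  | mul _ _ h1 h2 => exact .mul h1 h2
  | add _ _ h1 h2 => exact .add h1 h2
  | star _ h1 => exact .star h1

theorem erase {a b : KTerm X} {n m : T} (h : KEq Γ a b n m) :
    KEq (fun _ : X => ((), ())) a b () () := by
  induction h with
  | var x => exact .var _ _ _ rfl
  | symm _ h => exact .symm h
  | trans _ _ h k => exact .trans h k
  | one => exact .one _
  | zero => exact .zero _ _
  | mul _ _ h k => exact .mul h k
  | add _ _ h k => exact .add h k
  | star _ h => exact .star h
  | one_mul h => exact .one_mul (erase_typ h)
  | mul_one h => exact .mul_one (erase_typ h)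
  | mul_assoc h k l => exact .mul_assoc (erase_typ h) (erase_typ k) (erase_typ l)
  | add_zero h => exact .add_zero (erase_typ h)
  | add_comm h k => exact .add_comm (erase_typ h) (erase_typ k)
  | add_assoc h k l => exact .add_assoc (erase_typ h) (erase_typ k) (erase_typ l)
  | mul_add h k l => exact .mul_add (erase_typ h) (erase_typ k) (erase_typ l)
  | add_mul h k l => exact .add_mul (erase_typ h) (erase_typ k) (erase_typ l)
  | mul_zero h => exact .mul_zero (erase_typ h)
  | zero_mul h => exact .zero_mul (erase_typ h)
  | add_idem h => exact .add_idem (erase_typ h)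
  | star_unfold h => exact .star_unfold (erase_typ h)
  | star_ind_l _ h => exact .star_ind_l h
  | star_ind_r _ h => exact .star_ind_r h

end KU

/-- Untyping theorem for Kleene algebras: for all terms `a,b` and objects `n,m` such
that `a : n→m` and `b : n→m` are derivable in environment `Γ`, the untyped equality
`⊢ a = b` (i.e. the equality over the singleton set of objects) is derivable iff the
typed equality `a = b : n→m` is derivable in `Γ`. -/
theorem kleene_untyping {X T : Type} (Γ : X → T × T)
    (a b : KTerm X) (n m : T) :
    KTyp Γ a n m → KTyp Γ b n m →
    (KEq (fun _ : X => ((), ())) a b () () ↔ KEq Γ a b n m) := by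
  intro ha hb
  refine ⟨fun h => ?_, KU.erase⟩
  obtain ⟨ta, ea⟩ := KU.norm_typ_eq ha
  obtain ⟨tb, eb⟩ := KU.norm_typ_eq hb
  exact .trans ea (.trans (((KU.norm_rel Γ h).2 n m).2 ta) (.symm eb))
end

section
/- In cyclic MLL, the types of derivable sequents are squares: if the untyped sequent ⊢ l is derivable and the list l has type n→m in environment Γ, then n = m. (More generally, the proof establishes that for every splitting l = h;k and every type n→m of the cyclic permutation k;h, one has n = m.) -/
/-- MLL terms (formulae): variables, dual variables, multiplicative constants,
tensor and par. -/
inductive MLLTerm (X : Type) : Type where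
  | var : X → MLLTerm X
  | covar : X → MLLTerm X
  | one : MLLTerm X
  | bot : MLLTerm X
  | tens : MLLTerm X → MLLTerm X → MLLTerm X
  | parr : MLLTerm X → MLLTerm X → MLLTerm X

/-- Typing judgement for MLL terms, in environment `Γ`. -/
inductive MLLTyp {X T : Type} (Γ : X → T × T) : MLLTerm X → T → T → Prop where
  | var (x : X) (n m : T) : Γ x = (n, m) → MLLTyp Γ (.var x) n m
  | covar (x : X) (n m : T) : Γ x = (n, m) → MLLTyp Γ (.covar x) m n
  | one (n : T) : MLLTyp Γ .one n n
  | bot (n : T) : MLLTyp Γ .bot n n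
  | tens {a b : MLLTerm X} {n m p : T} :
      MLLTyp Γ a n m → MLLTyp Γ b m p → MLLTyp Γ (.tens a b) n p
  | parr {a b : MLLTerm X} {n m p : T} :
      MLLTyp Γ a n m → MLLTyp Γ b m p → MLLTyp Γ (.parr a b) n p

/-- Typing judgement for lists of MLL terms (composition of the types). -/
inductive MLLTypList {X T : Type} (Γ : X → T × T) : List (MLLTerm X) → T → T → Prop where
  | nil (n : T) : MLLTypList Γ [] n n
  | cons {a : MLLTerm X} {l : List (MLLTerm X)} {n m p : T} :
      MLLTyp Γ a n m → MLLTypList Γ l m p → MLLTypList Γ (a :: l) n p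

/-- The untyped one-sided sequent calculus for cyclic MLL: `MLLSeq l` means `⊢ l`. -/
inductive MLLSeq {X : Type} : List (MLLTerm X) → Prop where
  | one : MLLSeq [.one]
  | bot {l : List (MLLTerm X)} : MLLSeq l → MLLSeq (.bot :: l)
  | tens {l k : List (MLLTerm X)} {a b : MLLTerm X} :
      MLLSeq (l ++ [a]) → MLLSeq (b :: k) → MLLSeq (l ++ .tens a b :: k)
  | parr {a b : MLLTerm X} {l : List (MLLTerm X)} :
      MLLSeq (a :: b :: l) → MLLSeq (.parr a b :: l)
  | ax (x : X) : MLLSeq [.covar x, .var x]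
  | ex {a : MLLTerm X} {l : List (MLLTerm X)} : MLLSeq (l ++ [a]) → MLLSeq (a :: l)

theorem mll_typList_append {X T : Type} (Γ : X → T × T) (l k : List (MLLTerm X)) (n m : T) :
    MLLTypList Γ (l ++ k) n m ↔ ∃ p, MLLTypList Γ l n p ∧ MLLTypList Γ k p m := by
  induction l generalizing n with
  | nil =>
    constructor
    · intro h
      exact ⟨n, .nil n, h⟩
    · rintro ⟨p, h1, h2⟩
      cases h1
      exact h2
  | cons a l ih =>
    constructor
    · intro h
      cases h with
      | cons ha hl =>
        obtain ⟨p, h1, h2⟩ := (ih _).1 hl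
        exact ⟨p, .cons ha h1, h2⟩
    · rintro ⟨p, h1, h2⟩
      cases h1 with
      | cons ha hl => exact .cons ha ((ih _).2 ⟨p, hl, h2⟩)

theorem mll_typList_cons {X T : Type} (Γ : X → T × T) (a : MLLTerm X) (k : List (MLLTerm X))
    (n m : T) :
    MLLTypList Γ (a :: k) n m ↔ ∃ p, MLLTyp Γ a n p ∧ MLLTypList Γ k p m := by
  constructor
  · intro h
    cases h with
    | cons ha hl => exact ⟨_, ha, hl⟩
  · rintro ⟨p, h1, h2⟩
    exact .cons h1 h2

theorem mll_square_aux {X T : Type} (Γ : X → T × T) (s : List (MLLTerm X)) (hs : MLLSeq s) :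
    ∀ (h k : List (MLLTerm X)) (n m : T), s = h ++ k → MLLTypList Γ (k ++ h) n m → n = m := by
  induction hs with
  | one =>
    intro h k n m e ht
    have : k ++ h = [MLLTerm.one] := by
      rcases List.cons_eq_append_iff.1 e with ⟨rfl, rfl⟩ | ⟨h', rfl, e'⟩
      · rfl
      · have := List.append_eq_nil_iff.1 e'.symm
        simp [this]
    rw [this] at ht
    cases ht with
    | cons ha hl => cases ha; cases hl; rfl
  | ax x =>
    intro h k n m e ht
    have : k ++ h = [MLLTerm.covar x, .var x] ∨ k ++ h = [MLLTerm.var x, .covar x] := by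
      rcases List.cons_eq_append_iff.1 e with ⟨rfl, rfl⟩ | ⟨h', rfl, e'⟩
      · left; rfl
      · rcases List.cons_eq_append_iff.1 e' with ⟨rfl, rfl⟩ | ⟨h'', rfl, e''⟩
        · right; rfl
        · have := List.append_eq_nil_iff.1 e''.symm
          simp [this]
    rcases this with this | this <;> rw [this] at ht
    · cases ht with
      | cons ha hl =>
        cases hl with
        | cons hb hl => cases hl; cases ha; cases hb; simp_all
    · cases ht with
      | cons ha hl =>
        cases hl with
        | cons hb hl => cases hl; cases ha; cases hb; simp_all
  | @bot l _ ih =>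
    intro h k n m e ht
    rcases List.cons_eq_append_iff.1 e with ⟨rfl, rfl⟩ | ⟨h', rfl, rfl⟩
    · refine ih [] l n m rfl ?_
      cases ht with
      | cons ha hl => cases ha; exact hl
    · refine ih h' k n m rfl ?_
      obtain ⟨p, h1, h2⟩ := (mll_typList_append ..).1 ht
      cases h2 with
      | cons ha hl => cases ha; exact (mll_typList_append ..).2 ⟨_, h1, hl⟩
  | @parr a b l _ ih =>
    intro h k n m e ht
    rcases List.cons_eq_append_iff.1 e with ⟨rfl, rfl⟩ | ⟨h', rfl, rfl⟩
    · refine ih [] (a :: b :: l) n m rfl ?_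
      cases ht with
      | cons ha hl =>
        cases ha with
        | parr h1 h2 => exact .cons h1 (.cons h2 hl)
    · refine ih (a :: b :: h') k n m rfl ?_
      obtain ⟨p, h1, h2⟩ := (mll_typList_append ..).1 ht
      cases h2 with
      | cons ha hl =>
        cases ha with
        | parr h3 h4 => exact (mll_typList_append ..).2 ⟨_, h1, .cons h3 (.cons h4 hl)⟩
  | @ex a l _ ih =>
    intro h k n m e ht
    rcases List.cons_eq_append_iff.1 e with ⟨rfl, rfl⟩ | ⟨h', rfl, rfl⟩
    · exact ih l [a] n m rfl (by simpa using ht)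
    · exact ih h' (k ++ [a]) n m (by simp) (by simpa using ht)
  | @tens l k a b _ _ ih1 ih2 =>
    intro h k' n m e ht
    have key : (∃ l2, l = h ++ l2 ∧ k' = l2 ++ .tens a b :: k) ∨
        (∃ k1, h = l ++ .tens a b :: k1 ∧ k = k1 ++ k') := by
      rcases List.append_eq_append_iff.1 e with ⟨c, rfl, e'⟩ | ⟨c, rfl, rfl⟩
      · rcases List.cons_eq_append_iff.1 e' with ⟨rfl, rfl⟩ | ⟨h', rfl, rfl⟩
        · left; exact ⟨[], by simp, by simp⟩
        · right; exact ⟨h', rfl, rfl⟩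
      · left; exact ⟨c, rfl, rfl⟩
    rcases key with ⟨l2, rfl, rfl⟩ | ⟨k1, rfl, rfl⟩
    · simp only [List.append_assoc, List.cons_append, mll_typList_append,
        mll_typList_cons] at ht
      obtain ⟨p, hl2, q, hab, r, hk, hh⟩ := ht
      cases hab with
      | tens ha hb =>
        have e2 := ih2 [] (b :: k) _ _ rfl (by simpa using MLLTypList.cons hb hk)
        subst e2
        refine ih1 h (l2 ++ [a]) n m (by simp) ?_
        rw [List.append_assoc]
        exact (mll_typList_append ..).2 ⟨_, hl2, .cons ha hh⟩
    · simp only [mll_typList_append, mll_typList_cons] at ht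
      obtain ⟨p, hk', q, hl, r, hab, hk1⟩ := ht
      cases hab with
      | tens ha hb =>
        have e1 := ih1 [] (l ++ [a]) _ _ rfl (by
          rw [List.append_nil]
          exact (mll_typList_append ..).2 ⟨_, hl, .cons ha (.nil _)⟩)
        subst e1
        exact ih2 (b :: k1) k' n m rfl ((mll_typList_append ..).2 ⟨_, hk', .cons hb hk1⟩)

/-- In cyclic MLL, the types of derivable sequents are squares: if the untyped
sequent `⊢ l` is derivable and `l` has type `n→m` in environment `Γ`, then `n = m`;
and more generally, for every splitting `l = h;k` and every type `n→m` of the cyclic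
permutation `k;h`, one has `n = m`. -/
theorem mll_square_types {X T : Type} (Γ : X → T × T) :
    (∀ (l : List (MLLTerm X)) (n m : T), MLLSeq l → MLLTypList Γ l n m → n = m) ∧
    (∀ (h k : List (MLLTerm X)) (n m : T),
      MLLSeq (h ++ k) → MLLTypList Γ (k ++ h) n m → n = m) := by
  exact ⟨fun l n m hs ht => mll_square_aux Γ l hs [] l n m rfl (by simpa using ht),
    fun h k n m hs ht => mll_square_aux Γ _ hs h k n m rfl ht⟩
end

section
/- Untyping theorem for cyclic MLL: if the list l has type n→n in environment Γ, then the untyped sequent ⊢ l is derivable if and only if the typed sequent ⊢ₙ l is derivable in Γ. -/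
/-- The typed one-sided sequent calculus for cyclic MLL: `MLLTSeq Γ n l` means
`⊢ₙ l` (the sequent `l` is derivable at type `n→n`). -/
inductive MLLTSeq {X T : Type} (Γ : X → T × T) : T → List (MLLTerm X) → Prop where
  | one (n : T) : MLLTSeq Γ n [.one]
  | bot {n : T} {l : List (MLLTerm X)} : MLLTSeq Γ n l → MLLTSeq Γ n (.bot :: l)
  | tens {n : T} {l k : List (MLLTerm X)} {a b : MLLTerm X} :
      MLLTSeq Γ n (l ++ [a]) → MLLTSeq Γ n (b :: k) →
      MLLTSeq Γ n (l ++ .tens a b :: k)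
  | parr {n : T} {a b : MLLTerm X} {l : List (MLLTerm X)} :
      MLLTSeq Γ n (a :: b :: l) → MLLTSeq Γ n (.parr a b :: l)
  | ax (x : X) (n m : T) : Γ x = (n, m) → MLLTSeq Γ m [.covar x, .var x]
  | ex {a : MLLTerm X} {l : List (MLLTerm X)} {n m : T} :
      MLLTyp Γ a n m → MLLTSeq Γ m (l ++ [a]) → MLLTSeq Γ n (a :: l)

theorem MLLTypList_nil {X T : Type} (Γ : X → T × T) (n p : T) :
    MLLTypList Γ [] n p ↔ n = p := by
  constructor
  · intro h; cases h; rfl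
  · rintro rfl; exact .nil _

theorem MLLTypList_cons {X T : Type} (Γ : X → T × T) (a : MLLTerm X) (l) (n p : T) :
    MLLTypList Γ (a :: l) n p ↔ ∃ m, MLLTyp Γ a n m ∧ MLLTypList Γ l m p := by
  constructor
  · intro h; cases h with | cons h1 h2 => exact ⟨_, h1, h2⟩
  · rintro ⟨m, h1, h2⟩; exact .cons h1 h2

theorem MLLTypList_append {X T : Type} (Γ : X → T × T) (l k : List (MLLTerm X)) (n p : T) :
    MLLTypList Γ (l ++ k) n p ↔ ∃ m, MLLTypList Γ l n m ∧ MLLTypList Γ k m p := by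
  induction l generalizing n with
  | nil => simp [MLLTypList_nil]
  | cons a l ih =>
    simp only [List.cons_append, MLLTypList_cons, ih]
    constructor
    · rintro ⟨m, h, m', h', h''⟩; exact ⟨m', ⟨m, h, h'⟩, h''⟩
    · rintro ⟨m', ⟨m, h, h'⟩, h''⟩; exact ⟨m, h, m', h', h''⟩

theorem MLLTyp_tens {X T : Type} (Γ : X → T × T) (a b : MLLTerm X) (n p : T) :
    MLLTyp Γ (.tens a b) n p ↔ ∃ m, MLLTyp Γ a n m ∧ MLLTyp Γ b m p := by
  constructor
  · intro h; cases h with | tens h1 h2 => exact ⟨_, h1, h2⟩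
  · rintro ⟨m, h1, h2⟩; exact .tens h1 h2

theorem MLLTyp_parr {X T : Type} (Γ : X → T × T) (a b : MLLTerm X) (n p : T) :
    MLLTyp Γ (.parr a b) n p ↔ ∃ m, MLLTyp Γ a n m ∧ MLLTyp Γ b m p := by
  constructor
  · intro h; cases h with | parr h1 h2 => exact ⟨_, h1, h2⟩
  · rintro ⟨m, h1, h2⟩; exact .parr h1 h2

/-- Any typing of any rotation of a derivable sequent is square. -/
theorem MLL_square {X T : Type} (Γ : X → T × T) {u : Unit} {l : List (MLLTerm X)}
    (h : MLLTSeq (fun _ : X => ((), ())) u l) :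
    ∀ l₁ l₂, l = l₁ ++ l₂ → ∀ n p, MLLTypList Γ (l₂ ++ l₁) n p → n = p := by
  induction h with
  | one _ =>
    intro l₁ l₂ e n p ht
    rcases List.cons_eq_append_iff.1 e with ⟨rfl, rfl⟩ | ⟨l', rfl, e'⟩
    · simp only [List.append_nil, MLLTypList_cons, MLLTypList_nil] at ht
      obtain ⟨m, h1, rfl⟩ := ht
      cases h1; rfl
    · obtain ⟨rfl, rfl⟩ := List.append_eq_nil_iff.1 e'.symm
      simp only [List.nil_append, MLLTypList_cons, MLLTypList_nil] at ht
      obtain ⟨m, h1, rfl⟩ := ht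
      cases h1; rfl
  | bot _ ih =>
    intro l₁ l₂ e n p ht
    rcases List.cons_eq_append_iff.1 e with ⟨rfl, rfl⟩ | ⟨l', rfl, rfl⟩
    · simp only [List.append_nil, MLLTypList_cons] at ht
      obtain ⟨m, h1, h2⟩ := ht
      cases h1
      exact ih [] _ rfl _ _ (by simpa using h2)
    · simp only [MLLTypList_append, MLLTypList_cons] at ht
      obtain ⟨m, h0, m', h1, h2⟩ := ht
      cases h1
      exact ih _ _ rfl _ _ ((MLLTypList_append ..).2 ⟨_, h0, h2⟩)
  | @tens _ l k a b _ _ ih1 ih2 =>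
    intro l₁ l₂ e n p ht
    rcases List.append_eq_append_iff.1 e with ⟨l', rfl, e'⟩ | ⟨l', rfl, rfl⟩
    · rcases List.cons_eq_append_iff.1 e' with ⟨rfl, rfl⟩ | ⟨k', rfl, rfl⟩
      · simp only [MLLTypList_append, MLLTypList_cons, MLLTyp_tens, MLLTypList_nil] at ht
        obtain ⟨m, ⟨q, ⟨r, ha, hb⟩, hk⟩, s, hl, rfl⟩ := ht
        have e2 := ih2 [] _ rfl r m (by
          simp only [List.append_nil, MLLTypList_cons]; exact ⟨_, hb, hk⟩)
        subst e2
        exact ih1 l [a] rfl _ _ (by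
          simp only [MLLTypList_append, MLLTypList_cons, MLLTypList_nil]
          exact ⟨_, ⟨_, ha, rfl⟩, hl⟩)
      · simp only [MLLTypList_append, MLLTypList_cons, MLLTyp_tens] at ht
        obtain ⟨m, h2, q, hl, r, ⟨s, ha, hb⟩, hk⟩ := ht
        have e1 := ih1 [] (l ++ [a]) rfl m s (by
          simp only [List.append_nil, MLLTypList_append, MLLTypList_cons, MLLTypList_nil]
          exact ⟨_, hl, _, ha, rfl⟩)
        subst e1
        exact ih2 (b :: k') l₂ rfl _ _ (by
          simp only [MLLTypList_append, MLLTypList_cons]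
          exact ⟨_, h2, _, hb, hk⟩)
    · simp only [MLLTypList_append, MLLTypList_cons, MLLTyp_tens] at ht
      obtain ⟨m, ⟨q, hl, r, ⟨s, ha, hb⟩, hk⟩, h1⟩ := ht
      have e2 := ih2 [] _ rfl s m (by
        simp only [List.append_nil, MLLTypList_cons]; exact ⟨_, hb, hk⟩)
      subst e2
      exact ih1 l₁ (l' ++ [a]) (by simp) _ _ (by
        simp only [MLLTypList_append, MLLTypList_cons, MLLTypList_nil]
        exact ⟨_, ⟨_, hl, _, ha, rfl⟩, h1⟩)
  | @parr _ a b l _ ih =>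
    intro l₁ l₂ e n p ht
    rcases List.cons_eq_append_iff.1 e with ⟨rfl, rfl⟩ | ⟨l', rfl, rfl⟩
    · simp only [List.append_nil, MLLTypList_cons, MLLTyp_parr] at ht
      obtain ⟨m, ⟨q, ha, hb⟩, h2⟩ := ht
      exact ih [] _ rfl _ _ (by
        simp only [List.append_nil, MLLTypList_cons]; exact ⟨_, ha, _, hb, h2⟩)
    · simp only [MLLTypList_append, MLLTypList_cons, MLLTyp_parr] at ht
      obtain ⟨m, h0, m', ⟨q, ha, hb⟩, h2⟩ := ht
      exact ih (a :: b :: l') l₂ rfl _ _ (by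
        simp only [MLLTypList_append, MLLTypList_cons]; exact ⟨_, h0, _, ha, _, hb, h2⟩)
  | ax x _ _ _ =>
    intro l₁ l₂ e n p ht
    have key1 : ∀ n p, MLLTypList Γ [.covar x, .var x] n p → n = p := by
      intro n p ht
      simp only [MLLTypList_cons, MLLTypList_nil] at ht
      obtain ⟨m, h1, q, h2, rfl⟩ := ht
      cases h1; cases h2; simp_all
    have key2 : ∀ n p, MLLTypList Γ [.var x, .covar x] n p → n = p := by
      intro n p ht
      simp only [MLLTypList_cons, MLLTypList_nil] at ht
      obtain ⟨m, h1, q, h2, rfl⟩ := ht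
      cases h1; cases h2; simp_all
    rcases List.cons_eq_append_iff.1 e with ⟨rfl, rfl⟩ | ⟨l', rfl, e'⟩
    · exact key1 _ _ (by simpa using ht)
    · rcases List.cons_eq_append_iff.1 e' with ⟨rfl, rfl⟩ | ⟨l'', rfl, e''⟩
      · exact key2 _ _ (by simpa using ht)
      · obtain ⟨rfl, rfl⟩ := List.append_eq_nil_iff.1 e''.symm
        exact key1 _ _ (by simpa using ht)
  | @ex a l _ _ _ _ ih =>
    intro l₁ l₂ e n p ht
    rcases List.cons_eq_append_iff.1 e with ⟨rfl, rfl⟩ | ⟨l', rfl, rfl⟩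
    · exact ih l [a] rfl _ _ (by simpa using ht)
    · exact ih l' (l₂ ++ [a]) (by simp) _ _ (by simpa using ht)

theorem MLL_forward {X T : Type} (Γ : X → T × T) {u : Unit} {l : List (MLLTerm X)}
    (h : MLLTSeq (fun _ : X => ((), ())) u l) :
    ∀ n, MLLTypList Γ l n n → MLLTSeq Γ n l := by
  induction h with
  | one _ => intro n _; exact .one n
  | bot _ ih =>
    intro n ht
    obtain ⟨m, h1, h2⟩ := (MLLTypList_cons ..).1 ht
    cases h1
    exact .bot (ih _ h2)
  | @tens _ l k a b hl hk ih1 ih2 =>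
    intro n ht
    simp only [MLLTypList_append, MLLTypList_cons, MLLTyp_tens] at ht
    obtain ⟨q, h1, r, ⟨s, ha, hb⟩, h2⟩ := ht
    have t1 : MLLTypList Γ (l ++ [a]) n s := by
      simp only [MLLTypList_append, MLLTypList_cons, MLLTypList_nil]
      exact ⟨_, h1, _, ha, rfl⟩
    have e := MLL_square Γ hl [] _ rfl n s (by simpa using t1)
    subst e
    exact .tens (ih1 _ t1) (ih2 _ (.cons hb h2))
  | parr _ ih =>
    intro n ht
    simp only [MLLTypList_cons, MLLTyp_parr] at ht
    obtain ⟨r, ⟨s, ha, hb⟩, h2⟩ := ht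
    exact .parr (ih _ (.cons ha (.cons hb h2)))
  | ax x _ _ _ =>
    intro n ht
    simp only [MLLTypList_cons, MLLTypList_nil] at ht
    obtain ⟨m, h1, q, h2, rfl⟩ := ht
    cases h1 with
    | covar _ _ _ h => exact .ax x _ _ h
  | ex _ _ ih =>
    intro n ht
    obtain ⟨m, h1, h2⟩ := (MLLTypList_cons ..).1 ht
    exact .ex h1 (ih _ ((MLLTypList_append ..).2 ⟨_, h2, .cons h1 (.nil _)⟩))

theorem MLL_unit_typ {X : Type} (a : MLLTerm X) :
    MLLTyp (fun _ : X => ((), ())) a () () := by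
  induction a with
  | var x => exact .var x _ _ rfl
  | covar x => exact .covar x _ _ rfl
  | one => exact .one _
  | bot => exact .bot _
  | tens _ _ h1 h2 => exact .tens h1 h2
  | parr _ _ h1 h2 => exact .parr h1 h2

theorem MLL_backward {X T : Type} (Γ : X → T × T) {n : T} {l : List (MLLTerm X)}
    (h : MLLTSeq Γ n l) : MLLTSeq (fun _ : X => ((), ())) () l := by
  induction h with
  | one _ => exact .one _
  | bot _ ih => exact .bot ih
  | tens _ _ h1 h2 => exact .tens h1 h2
  | parr _ ih => exact .parr ih
  | ax x _ _ _ => exact .ax x _ _ rfl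
  | ex _ _ ih => exact .ex (MLL_unit_typ _) ih

/-- Untyping theorem for cyclic MLL: if the list `l` has type `n→n` in environment
`Γ`, then the untyped sequent `⊢ l` (i.e. the typed sequent over the singleton set
of objects) is derivable iff the typed sequent `⊢ₙ l` is derivable in `Γ`. -/
theorem mll_untyping {X T : Type} (Γ : X → T × T)
    (l : List (MLLTerm X)) (n : T) :
    MLLTypList Γ l n n →
    (MLLTSeq (fun _ : X => ((), ())) () l ↔ MLLTSeq Γ n l) :=
  fun ht => ⟨fun h => MLL_forward Γ h n ht, fun h => MLL_backward Γ h⟩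
end
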